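/- For every integer k ≥ 2, the first integral singular homology group of the unordered configuration space of k points in the 2-sphere is cyclic of order 2k − 2: H_1(C_k(S²); ℤ) ≅ ℤ/(2k−2)ℤ. -/

import Mathlib

open CategoryTheory

/-- The singular chain complex functor with coefficients in a commutative ring `R`:
the levelwise free `R`-module on the singular simplicial set of a space, turned into
a chain complex via the alternating face map complex. -/
noncomputable def singularChainComplexFunctor (R : Type) [CommRing R] :
    TopCat.{0} ⥤ ChainComplex (ModuleCat.{0} R) ℕ :=
  TopCat.toSSet ⋙ ((SimplicialObject.whiskering _ _).obj (ModuleCat.free R)) ⋙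
    AlgebraicTopology.alternatingFaceMapComplex _

/-- The `n`-th singular homology of a topological space, with coefficients in `R`. -/
noncomputable def SingularHomology (R : Type) [CommRing R] (n : ℕ) (X : Type)
    [TopologicalSpace X] : ModuleCat.{0} R :=
  (singularChainComplexFunctor R ⋙ HomologicalComplex.homologyFunctor _ _ n).obj (TopCat.of X)

/-- The setoid on the ordered configuration space (the space of injective tuples
`Fin k → M`) identifying tuples that differ by a permutation of the coordinates. -/
def configSetoid (M : Type) (k : ℕ) : Setoid {f : Fin k → M // Function.Injective f} where
  r f g := ∃ σ : Equiv.Perm (Fin k), (f : Fin k → M) ∘ σ = g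
  iseqv := by
    constructor
    · exact fun f => ⟨Equiv.refl _, rfl⟩
    · rintro f g ⟨σ, h⟩
      exact ⟨σ.symm, by rw [← h]; ext x; simp⟩
    · rintro f g h ⟨σ, hσ⟩ ⟨τ, hτ⟩
      exact ⟨τ.trans σ, by rw [← hτ, ← hσ]; rfl⟩

/-- The unordered configuration space `C_k(M)` of `k` points in `M`: the quotient of
the space of injective tuples `Fin k → M` (with the subspace topology from the product
topology) by the permutation action of the symmetric group, with the quotient topology. -/
def UnordConfigSpace (M : Type) (k : ℕ) : Type := Quotient (configSetoid M k)

instance (M : Type) [TopologicalSpace M] (k : ℕ) : TopologicalSpace (UnordConfigSpace M k) :=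
  instTopologicalSpaceQuotient



open CategoryTheory
open unitInterval Topology

namespace CfgH

/-- Linear interpolation inside the unit interval. -/
noncomputable def lp (a b s : I) : I :=
  ⟨(1 - (s : ℝ)) * a + s * b, by
    have hs := s.2; have ha := a.2; have hb := b.2
    constructor
    · nlinarith [hs.1, hs.2, ha.1, ha.2, hb.1, hb.2, mul_nonneg hs.1 hb.1,
        mul_nonneg (sub_nonneg.2 hs.2) ha.1]
    · nlinarith [hs.1, hs.2, ha.1, ha.2, hb.1, hb.2, mul_nonneg hs.1 (sub_nonneg.2 hb.2),
        mul_nonneg (sub_nonneg.2 hs.2) (sub_nonneg.2 ha.2)]⟩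

lemma lp_zero (a b : I) : lp a b 0 = a := by ext; simp [lp]

lemma lp_one (a b : I) : lp a b 1 = b := by ext; simp [lp]

lemma continuous_lp (a b : I) : Continuous (lp a b) := by
  unfold lp
  fun_prop

/-- An additive functional on paths, closed under triangles (a singular 1-cocycle). -/
structure Coc (X A : Type) [TopologicalSpace X] [AddCommGroup A] where
  /-- the value on a path -/
  φ : C(I, X) → A
  /-- the cocycle condition -/
  tri : ∀ h : C(I × I, X), φ (h.comp ⟨fun s => (s, 0), by fun_prop⟩) +
    φ (h.comp ⟨fun s => (1, s), by fun_prop⟩) = φ (h.comp ⟨fun s => (s, s), by fun_prop⟩)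

namespace Coc

variable {X Y A : Type} [TopologicalSpace X] [TopologicalSpace Y] [AddCommGroup A]

lemma const (c : Coc X A) (x : X) : c.φ (ContinuousMap.const I x) = 0 := by
  have := c.tri (ContinuousMap.const _ x)
  simpa using this

lemma square (c : Coc X A) (h : C(I × I, X)) :
    c.φ (h.comp ⟨fun s => (s, 0), by fun_prop⟩) + c.φ (h.comp ⟨fun s => (1, s), by fun_prop⟩) =
    c.φ (h.comp ⟨fun s => (0, s), by fun_prop⟩) + c.φ (h.comp ⟨fun s => (s, 1), by fun_prop⟩) := by
  rw [c.tri h]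
  exact (c.tri (h.comp ⟨fun p => (p.2, p.1), by fun_prop⟩)).symm

/-- Free homotopy of loops. -/
lemma free (c : Coc X A) (h : C(I × I, X)) (hp : ∀ s, h (s, 0) = h (s, 1)) :
    c.φ (h.comp ⟨fun s => (0, s), by fun_prop⟩) = c.φ (h.comp ⟨fun s => (1, s), by fun_prop⟩) := by
  have h1 := c.square h
  have h2 : h.comp ⟨fun s : I => (s, (0 : I)), by fun_prop⟩ =
    h.comp ⟨fun s : I => (s, (1 : I)), by fun_prop⟩ := by
    ext s; exact hp s
  rw [h2, add_comm] at h1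
  exact (add_right_cancel h1).symm

/-- A subpath. -/
noncomputable def sub (γ : C(I, X)) (a b : I) : C(I, X) := γ.comp ⟨lp a b, continuous_lp a b⟩

lemma sub_add (c : Coc X A) (γ : C(I, X)) (x y z : I) :
    c.φ (sub γ x y) + c.φ (sub γ y z) = c.φ (sub γ x z) := by
  let h : C(I × I, X) := γ.comp ⟨fun p => Set.projIcc (0:ℝ) 1 zero_le_one
    ((x:ℝ) + p.1 * ((y:ℝ) - x) + p.2 * ((z:ℝ) - y)), by
      refine continuous_projIcc.comp ?_
      fun_prop⟩
  have key : ∀ (t u v s : I) , (v = lp t u s) → Set.projIcc (0:ℝ) 1 zero_le_one (v:ℝ) = lp t u s := by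
    intro t u v s h
    rw [h, Set.projIcc_val]
  have := c.tri h
  convert this using 2
  · congr 1
    ext s
    simp only [sub, h, ContinuousMap.comp_apply, ContinuousMap.coe_mk]
    congr 1
    rw [← key x y _ s rfl]
    congr 1
    simp [lp]; ring
  · congr 1
    ext s
    simp only [sub, h, ContinuousMap.comp_apply, ContinuousMap.coe_mk]
    congr 1
    rw [← key y z _ s rfl]
    congr 1
    simp [lp]; ring
  · ext s
    simp only [sub, h, ContinuousMap.comp_apply, ContinuousMap.coe_mk]
    congr 1
    rw [← key x z _ s rfl]
    congr 1
    simp [lp]; ring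

lemma sub_zero_one (γ : C(I, X)) : sub γ 0 1 = γ := by
  ext s
  simp only [sub, ContinuousMap.comp_apply, ContinuousMap.coe_mk]
  congr 1
  ext; simp [lp]

lemma sub_self (γ : C(I, X)) (a : I) : sub γ a a = ContinuousMap.const I (γ a) := by
  ext s
  simp only [sub, ContinuousMap.comp_apply, ContinuousMap.coe_mk, ContinuousMap.const_apply]
  congr 1
  ext; simp [lp]; ring

/-- reversal -/
noncomputable def rev (γ : C(I, X)) : C(I, X) := γ.comp ⟨unitInterval.symm, continuous_symm⟩

lemma rev_eq (γ : C(I, X)) : rev γ = sub γ 1 0 := by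
  ext s
  simp only [sub, rev, ContinuousMap.comp_apply, ContinuousMap.coe_mk]
  congr 1
  ext; simp [lp]

lemma φ_rev (c : Coc X A) (γ : C(I, X)) : c.φ (rev γ) = - c.φ γ := by
  have := c.sub_add γ 0 1 0
  rw [sub_self, c.const, sub_zero_one, ← rev_eq] at this
  exact (neg_eq_of_add_eq_zero_right this).symm

/-- `f` is a potential of the cocycle on `U`. -/
def Pot (c : Coc X A) (U : Set X) (f : X → A) : Prop :=
  ∀ γ : C(I, X), (∀ t, γ t ∈ U) → c.φ γ = f (γ 1) - f (γ 0)

lemma pot_of_local (c : Coc X A) (f : X → A)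
    (h : ∀ x, ∃ U : Set X, IsOpen U ∧ x ∈ U ∧ c.Pot U f) : c.Pot Set.univ f := by
  intro γ _
  let g : I → A := fun t => c.φ (sub γ 0 t) - f (γ t)
  have hg : IsLocallyConstant g := by
    rw [IsLocallyConstant.iff_eventually_eq]
    intro t
    obtain ⟨U, hU, htU, hp⟩ := h (γ t)
    have hmem : γ ⁻¹' U ∈ 𝓝 t := (hU.preimage γ.continuous).mem_nhds htU
    rw [Metric.mem_nhds_iff] at hmem
    obtain ⟨ε, hε, hb⟩ := hmem
    filter_upwards [Metric.ball_mem_nhds t hε] with t' ht'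
    have h1 := c.sub_add γ 0 t t'
    have h2 : c.φ (sub γ t t') = f (γ t') - f (γ t) := by
      rw [hp (sub γ t t')]
      · simp only [sub, ContinuousMap.comp_apply, ContinuousMap.coe_mk, lp_zero, lp_one]
      · intro s
        apply hb
        rw [Metric.mem_ball, Subtype.dist_eq, Real.dist_eq] at ht' ⊢
        have : ((lp t t' s : I) : ℝ) - t = s * ((t' : ℝ) - t) := by simp [lp]; ring
        change |((lp t t' s : I) : ℝ) - t| < ε
        rw [this, abs_mul, abs_of_nonneg s.2.1]
        calc (s:ℝ) * |(t':ℝ) - t| ≤ 1 * |(t':ℝ) - t| := by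
              gcongr; exact s.2.2
          _ < ε := by rw [one_mul]; exact ht'
    change c.φ (sub γ 0 t') - f (γ t') = c.φ (sub γ 0 t) - f (γ t)
    rw [← h1, h2]; abel
  have h01 : g 0 = g 1 := hg.apply_eq_of_isPreconnected isPreconnected_univ trivial trivial
  simp only [g, sub_self, sub_zero_one, c.const] at h01
  rw [zero_sub] at h01
  rw [sub_eq_add_neg, h01]; abel

lemma glue (c : Coc X A) {ι : Type} (U : ι → Set X) (f : ι → X → A) (i0 : ι)
    (hU : ∀ i, IsOpen (U i)) (hcov : ∀ x, ∃ i, x ∈ U i) (hp : ∀ i, c.Pot (U i) (f i))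
    (hpair : ∀ i j x y, x ∈ U i → x ∈ U j → y ∈ U i → y ∈ U j →
      f i x - f j x = f i y - f j y)
    (htri : ∀ i j l, ∃ x, x ∈ U i ∧ x ∈ U j ∧ x ∈ U l) : ∃ g, c.Pot Set.univ g := by
  choose p hp1 hp2 hp3 using fun i => htri i i0 i0
  choose idx hidx using hcov
  let d : ι → A := fun i => f i (p i) - f i0 (p i)
  have hd : ∀ i j x, x ∈ U i → x ∈ U j → f i x - d i = f j x - d j := by
    intro i j x hi hj
    obtain ⟨y, hyi, hyj, hy0⟩ := htri i j i0
    have e1 := hpair i j x y hi hj hyi hyj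
    have e2 := hpair i i0 (p i) y (hp1 i) (hp2 i) hyi hy0
    have e3 := hpair j i0 (p j) y (hp1 j) (hp2 j) hyj hy0
    simp only [d]
    rw [e2, e3, sub_eq_sub_iff_add_eq_add]
    rw [sub_eq_sub_iff_add_eq_add] at e1
    have : f i x = f i y + f j x - f j y := by rw [eq_sub_iff_add_eq, e1]
    rw [this]; abel
  refine ⟨fun x => f (idx x) x - d (idx x), c.pot_of_local _ fun x => ⟨U (idx x), hU _, hidx x, ?_⟩⟩
  intro γ hγ
  have := hp (idx x) γ hγ
  simp only
  rw [this, hd _ (idx x) (γ 1) (hidx _) (hγ 1), hd _ (idx x) (γ 0) (hidx _) (hγ 0)]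
  abel

/-- Pull back. -/
def comap (c : Coc Y A) (g : C(X, Y)) : Coc X A where
  φ γ := c.φ (g.comp γ)
  tri h := c.tri (g.comp h)

lemma comap_φ (c : Coc Y A) (g : C(X, Y)) (γ : C(I, X)) : (c.comap g).φ γ = c.φ (g.comp γ) := rfl

/-- difference of a cocycle and a multiple of an integral one -/
def subMul (c : Coc X A) (w : Coc X ℤ) (a : A) : Coc X A where
  φ γ := c.φ γ - w.φ γ • a
  tri h := by
    rw [← c.tri h, ← w.tri h, add_smul]; abel

/-- push forward along a group hom -/
def push {B : Type} [AddCommGroup B] (c : Coc X A) (g : A →+ B) : Coc X B where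
  φ γ := g (c.φ γ)
  tri h := by rw [← map_add, c.tri]

lemma pot_starConvex {E : Type} [AddCommGroup E] [Module ℝ E] [TopologicalSpace E]
    [IsTopologicalAddGroup E] [ContinuousSMul ℝ E] {S : Set E} {x0 : E} (hx0 : x0 ∈ S)
    (hS : StarConvex ℝ x0 S) (c : Coc S A) : ∃ f : S → A, c.Pot Set.univ f := by
  have mem : ∀ (x : S) (s : I), (1 - (s:ℝ)) • x0 + (s:ℝ) • (x:E) ∈ S := fun x s =>
    hS x.2 (sub_nonneg.2 s.2.2) s.2.1 (by ring)
  let seg : S → C(I, S) := fun x => ⟨fun s => ⟨_, mem x s⟩, by fun_prop⟩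
  refine ⟨fun x => c.φ (seg x), fun γ _ => ?_⟩
  let h : C(I × I, S) := ⟨fun p => ⟨_, mem (γ p.2) p.1⟩, by fun_prop⟩
  have := c.square h
  have e1 : h.comp ⟨fun s => (s, 0), by fun_prop⟩ = seg (γ 0) := rfl
  have e2 : h.comp ⟨fun s => (s, 1), by fun_prop⟩ = seg (γ 1) := rfl
  have e3 : h.comp ⟨fun s => (1, s), by fun_prop⟩ = γ := by
    ext s; simp [h]
  have e4 : h.comp ⟨fun s => (0, s), by fun_prop⟩ = ContinuousMap.const I ⟨x0, hx0⟩ := by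
    ext s; simp [h]
  rw [e1, e2, e3, e4, c.const, zero_add] at this
  simp only [← this]; abel

lemma pot_embedding (c : Coc X A) (e : C(Y, X)) (he : IsEmbedding e)
    (h : ∃ f, (c.comap e).Pot Set.univ f) : ∃ f, c.Pot (Set.range e) f := by
  obtain ⟨f, hf⟩ := h
  rcases isEmpty_or_nonempty Y with hY | hY
  · exact ⟨fun _ => 0, fun γ hγ => (hY.elim (hγ 0).choose)⟩
  refine ⟨fun x => f (Function.invFun e x), fun γ hγ => ?_⟩
  have hinv : ∀ t, e (Function.invFun e (γ t)) = γ t := fun t => Function.invFun_eq (hγ t)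
  let γ' : C(I, Y) := ⟨fun t => Function.invFun e (γ t), by
    rw [he.continuous_iff]
    convert γ.continuous using 1
    ext t; exact hinv t⟩
  have h1 := hf γ' (fun _ => trivial)
  rw [comap_φ] at h1
  have h2 : e.comp γ' = γ := by ext t; exact hinv t
  rw [h2] at h1
  exact h1

end Coc

end CfgH


open CategoryTheory
open unitInterval Topology

namespace CfgH

section homology
open Simplicial

/-- singular simplices -/
abbrev Sn (X : Type) [TopologicalSpace X] (n : ℕ) : Type :=
  (TopCat.toSSet.obj (TopCat.of X)).obj (Opposite.op ⦋n⦌)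

variable {X : Type} [TopologicalSpace X]

/-- the singular complex -/
noncomputable abbrev Kc (X : Type) [TopologicalSpace X] : ChainComplex (ModuleCat.{0} ℤ) ℕ :=
  (singularChainComplexFunctor ℤ).obj (TopCat.of X)

/-- basis vector -/
noncomputable def bs {n : ℕ} (τ : Sn X n) : (Kc X).X n := (Finsupp.single τ (1 : ℤ) : Sn X n →₀ ℤ)

/-- linear maps out of chains -/
noncomputable def lft {n : ℕ} {A : Type} [AddCommGroup A] (g : Sn X n → A) : (Kc X).X n →ₗ[ℤ] A :=
  (Finsupp.lift A ℤ (Sn X n) g : (Sn X n →₀ ℤ) →ₗ[ℤ] A)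

lemma lft_bs {n : ℕ} {A : Type} [AddCommGroup A] (g : Sn X n → A) (τ : Sn X n) :
    lft g (bs τ) = g τ := by
  unfold lft bs
  erw [Finsupp.lift_apply]
  simp

lemma ext_bs {n : ℕ} {A : Type} [AddCommGroup A] (f g : (Kc X).X n →ₗ[ℤ] A)
    (h : ∀ τ, f (bs τ) = g (bs τ)) : f = g := by
  apply Finsupp.lhom_ext' (M := ℤ) (R := ℤ) (α := Sn X n) (N := A)
  intro τ
  ext
  exact h τ

lemma d_bs {n : ℕ} (τ : Sn X (n+1)) :
    ((Kc X).d (n+1) n).hom (bs τ) = ∑ i : Fin (n+2), ((-1 : ℤ) ^ (i : ℕ)) •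
      bs ((TopCat.toSSet.obj (TopCat.of X)).δ i τ) := by
  have : (Kc X).d (n+1) n = ∑ i : Fin (n+2), ((-1 : ℤ) ^ (i : ℕ)) •
    ((((SimplicialObject.whiskering _ _).obj (ModuleCat.free ℤ)).obj
      (TopCat.toSSet.obj (TopCat.of X))).δ i) :=
    AlgebraicTopology.AlternatingFaceMapComplex.obj_d_eq _ n
  rw [this]
  erw [ModuleCat.hom_sum]
  rw [LinearMap.sum_apply]
  refine Finset.sum_congr rfl fun i _ => ?_
  erw [ModuleCat.hom_zsmul]
  refine congrArg (fun y : (Kc X).X n => ((-1 : ℤ) ^ (i : ℕ)) • y) ?_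
  exact Finsupp.mapDomain_single

/-- the simplex as a map -/
noncomputable def toM {n : ℕ} : Sn X n ≃ C(stdSimplex ℝ (Fin (n+1)), X) :=
  TopCat.toSSetObjEquiv (TopCat.of X) (Opposite.op ⦋n⦌)

lemma toM_δ {n : ℕ} (τ : Sn X (n+1)) (i : Fin (n+2)) (x) :
    toM ((TopCat.toSSet.obj (TopCat.of X)).δ i τ) x = toM τ (stdSimplex.map (Fin.succAbove i) x) := by
  rfl

/-- the interval as simplex -/
noncomputable def iS : C(I, stdSimplex ℝ (Fin 2)) :=
  ⟨fun t => ⟨![1 - (t:ℝ), t], by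
    constructor
    · intro i; fin_cases i
      · simpa using t.2.2
      · simpa using t.2.1
    · simp⟩, by
      refine Continuous.subtype_mk ?_ _
      refine continuous_pi fun i => ?_
      fin_cases i
      · simp; fun_prop
      · simp; fun_prop⟩

/-- the simplex as interval -/
noncomputable def sI : C(stdSimplex ℝ (Fin 2), I) :=
  ⟨fun x => ⟨x 1, by
    have h0 : 0 ≤ x 0 := x.2.1 0
    have h1 : 0 ≤ x 1 := x.2.1 1
    have hs : x 0 + x 1 = 1 := by have := x.2.2; rw [Fin.sum_univ_two] at this; exact this
    constructor <;> linarith⟩, by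
      refine Continuous.subtype_mk ?_ _
      exact (continuous_apply 1).comp continuous_subtype_val⟩

lemma iS_sI (x) : iS (sI x) = x := by
  ext i
  have hs : x 0 + x 1 = 1 := by have := x.2.2; rw [Fin.sum_univ_two] at this; exact this
  fin_cases i
  · change 1 - x 1 = x 0
    linarith
  · rfl

lemma sI_iS (x) : sI (iS x) = x := by
  ext; rfl

/-- simplex from a path -/
noncomputable def pS (γ : C(I, X)) : Sn X 1 := toM.symm (γ.comp sI)

/-- path from a simplex -/
noncomputable def pP (τ : Sn X 1) : C(I, X) := (toM τ).comp iS

lemma pP_pS (γ : C(I, X)) : pP (pS γ) = γ := by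
  ext t; simp [pP, pS, sI_iS]

lemma pS_pP (τ : Sn X 1) : pS (pP τ) = τ := by
  apply toM.injective
  ext t; simp [pP, pS, iS_sI]

/-- point of a 0-simplex -/
noncomputable def pt (τ : Sn X 0) : X := toM τ default

/-- 0-simplex of a point -/
noncomputable def tp (x : X) : Sn X 0 := toM.symm (ContinuousMap.const _ x)

lemma tp_pt (τ : Sn X 0) : tp (pt τ) = τ := by
  apply toM.injective
  ext t
  simp only [tp, pt, Equiv.apply_symm_apply, ContinuousMap.const_apply]
  congr 1
  exact Subsingleton.elim _ _

lemma map_cd {n m : ℕ} (f : Fin n → Fin m) (x : stdSimplex ℝ (Fin n)) (j : Fin m) :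
    (stdSimplex.map f x) j = ∑ i, if f i = j then x i else 0 := by
  rw [stdSimplex.map_coe, FunOnFinite.linearMap_apply_apply, Finset.sum_filter]

lemma iS0 (t : I) : (iS t) 0 = 1 - (t:ℝ) := rfl
lemma iS1 (t : I) : (iS t) 1 = (t:ℝ) := rfl

lemma sum_std2 (x : stdSimplex ℝ (Fin 2)) : x 0 + x 1 = 1 := by
  have := x.2.2
  rw [Fin.sum_univ_two] at this
  exact this

lemma sum_std3 (x : stdSimplex ℝ (Fin 3)) : x 0 + x 1 + x 2 = 1 := by
  have := x.2.2
  rw [Fin.sum_univ_three] at this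
  exact this

lemma default_std (i : Fin 1) : (default : stdSimplex ℝ (Fin 1)) i = 1 := by
  fin_cases i
  simp

lemma pt_δ0 (τ : Sn X 1) : pt ((TopCat.toSSet.obj (TopCat.of X)).δ 0 τ) = pP τ 1 := by
  unfold pt
  erw [toM_δ]
  simp only [pP, ContinuousMap.comp_apply]
  congr 1
  ext i
  rw [map_cd, Fin.sum_univ_one, default_std]
  fin_cases i
  · exact (if_neg (by decide)).trans (by simp [iS0])
  · exact (if_pos (by decide)).trans (by simp [iS1])

lemma pt_δ1 (τ : Sn X 1) : pt ((TopCat.toSSet.obj (TopCat.of X)).δ 1 τ) = pP τ 0 := by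
  unfold pt
  erw [toM_δ]
  simp only [pP, ContinuousMap.comp_apply]
  congr 1
  ext i
  rw [map_cd, Fin.sum_univ_one, default_std]
  fin_cases i
  · exact (if_pos (by decide)).trans (by simp [iS0])
  · exact (if_neg (by decide)).trans (by simp [iS1])

/-- triangle to square -/
noncomputable def tS : C(stdSimplex ℝ (Fin 3), I × I) :=
  ⟨fun x => (⟨x 1 + x 2, by
    have h0 : 0 ≤ x 0 := x.2.1 0
    have h1 : 0 ≤ x 1 := x.2.1 1
    have h2 : 0 ≤ x 2 := x.2.1 2
    have := sum_std3 x
    constructor <;> linarith⟩, ⟨x 2, by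
    have h0 : 0 ≤ x 0 := x.2.1 0
    have h1 : 0 ≤ x 1 := x.2.1 1
    have h2 : 0 ≤ x 2 := x.2.1 2
    have := sum_std3 x
    constructor <;> linarith⟩), by
      refine Continuous.prodMk (Continuous.subtype_mk ?_ _) (Continuous.subtype_mk ?_ _)
      · exact ((continuous_apply 1).comp continuous_subtype_val).add
          ((continuous_apply 2).comp continuous_subtype_val)
      · exact (continuous_apply 2).comp continuous_subtype_val⟩

/-- the triangle simplex of a square -/
noncomputable def sq2 (h : C(I × I, X)) : Sn X 2 := toM.symm (h.comp tS)

lemma tS1 (x) : ((tS x).1 : ℝ) = x 1 + x 2 := rfl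
lemma tS2 (x) : ((tS x).2 : ℝ) = x 2 := rfl

lemma pP_δ (τ : Sn X 2) (i : Fin 3) (t : I) :
    pP ((TopCat.toSSet.obj (TopCat.of X)).δ i τ) t =
      toM τ (stdSimplex.map (Fin.succAbove i) (iS t)) := rfl

/-- square to triangle -/
noncomputable def ts : C(I × I, stdSimplex ℝ (Fin 3)) :=
  ⟨fun p => ⟨![1 - (p.1:ℝ), p.1 - min (p.1:ℝ) p.2, min (p.1:ℝ) p.2], by
    constructor
    · intro i; fin_cases i
      · simpa using p.1.2.2
      · simp
      · simpa using ⟨p.1.2.1, p.2.2.1⟩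
    · simp [Fin.sum_univ_three]⟩, by
      refine Continuous.subtype_mk ?_ _
      refine continuous_pi fun i => ?_
      fin_cases i
      · simp; fun_prop
      · simp; fun_prop
      · simp; fun_prop⟩

lemma ts_tS (x) : ts (tS x) = x := by
  have h0 : 0 ≤ x 0 := x.2.1 0
  have h1 : 0 ≤ x 1 := x.2.1 1
  have h2 : 0 ≤ x 2 := x.2.1 2
  have := sum_std3 x
  have hm : min (x 1 + x 2) (x 2) = x 2 := min_eq_right (by linarith)
  ext i
  fin_cases i
  · change 1 - (x 1 + x 2) = x 0; linarith
  · change (x 1 + x 2) - min (x 1 + x 2) (x 2) = x 1; rw [hm]; ring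
  · exact hm

lemma sq2_surj (τ : Sn X 2) : sq2 ((toM τ).comp ts) = τ := by
  apply toM.injective
  ext x
  simp [sq2, ts_tS]

lemma ite_c {P Q : Prop} [Decidable P] [Decidable Q] {b c : Bool} (hP : decide P = b)
    (hQ : decide Q = c) (x y : ℝ) :
    ((if P then x else 0) + if Q then y else 0) = (cond b x 0) + cond c y 0 := by
  subst hP hQ
  by_cases hP : P <;> by_cases hQ : Q <;> simp [hP, hQ]

lemma face0 (h : C(I × I, X)) : pP ((TopCat.toSSet.obj (TopCat.of X)).δ 0 (sq2 h)) =
    h.comp ⟨fun s => (1, s), by fun_prop⟩ := by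
  ext t
  rw [pP_δ]
  simp only [sq2, Equiv.apply_symm_apply, ContinuousMap.comp_apply, ContinuousMap.coe_mk]
  congr 1
  have e1 : (stdSimplex.map (Fin.succAbove 0) (iS t)) 1 = 1 - (t:ℝ) := by
    rw [map_cd, Fin.sum_univ_two, ite_c (b := true) (c := false) (by decide) (by decide), iS0, iS1]; simp
  have e2 : (stdSimplex.map (Fin.succAbove 0) (iS t)) 2 = (t:ℝ) := by
    rw [map_cd, Fin.sum_univ_two, ite_c (b := false) (c := true) (by decide) (by decide), iS0, iS1]; simp
  ext
  · rw [tS1, e1, e2]; simp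
  · rw [tS2, e2]

lemma face1 (h : C(I × I, X)) : pP ((TopCat.toSSet.obj (TopCat.of X)).δ 1 (sq2 h)) =
    h.comp ⟨fun s => (s, s), by fun_prop⟩ := by
  ext t
  rw [pP_δ]
  simp only [sq2, Equiv.apply_symm_apply, ContinuousMap.comp_apply, ContinuousMap.coe_mk]
  congr 1
  have e1 : (stdSimplex.map (Fin.succAbove 1) (iS t)) 1 = 0 := by
    rw [map_cd, Fin.sum_univ_two, ite_c (b := false) (c := false) (by decide) (by decide), iS0, iS1]; simp
  have e2 : (stdSimplex.map (Fin.succAbove 1) (iS t)) 2 = (t:ℝ) := by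
    rw [map_cd, Fin.sum_univ_two, ite_c (b := false) (c := true) (by decide) (by decide), iS0, iS1]; simp
  ext
  · rw [tS1, e1, e2]; simp
  · rw [tS2, e2]

lemma face2 (h : C(I × I, X)) : pP ((TopCat.toSSet.obj (TopCat.of X)).δ 2 (sq2 h)) =
    h.comp ⟨fun s => (s, 0), by fun_prop⟩ := by
  ext t
  rw [pP_δ]
  simp only [sq2, Equiv.apply_symm_apply, ContinuousMap.comp_apply, ContinuousMap.coe_mk]
  congr 1
  have e1 : (stdSimplex.map (Fin.succAbove 2) (iS t)) 1 = (t:ℝ) := by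
    rw [map_cd, Fin.sum_univ_two, ite_c (b := false) (c := true) (by decide) (by decide), iS0, iS1]; simp
  have e2 : (stdSimplex.map (Fin.succAbove 2) (iS t)) 2 = 0 := by
    rw [map_cd, Fin.sum_univ_two, ite_c (b := false) (c := false) (by decide) (by decide), iS0, iS1]; simp
  ext
  · rw [tS1, e1, e2]; simp
  · rw [tS2, e2]; simp

end homology
end CfgH


open CategoryTheory
open unitInterval Topology

namespace CfgH

lemma homology_desc {R : Type} [CommRing R] (S : ShortComplex (ModuleCat.{0} R)) :
    ∃ q : S.g.hom.toAddMonoidHom.ker →+ S.homology, Function.Surjective q ∧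
      ∀ x, q x = 0 ↔ ∃ z, S.f.hom z = x := by
  let q0 : LinearMap.ker S.g.hom →ₗ[R] S.homology :=
    S.moduleCatHomologyIso.toLinearEquiv.symm.toLinearMap ∘ₗ
      (LinearMap.range S.moduleCatToCycles).mkQ
  refine ⟨⟨⟨fun x => q0 ⟨x.1, x.2⟩, q0.map_zero⟩, fun x y => q0.map_add ⟨x.1, x.2⟩ ⟨y.1, y.2⟩⟩, ?_, ?_⟩
  · have : Function.Surjective q0 :=
      S.moduleCatHomologyIso.toLinearEquiv.symm.surjective.comp (Submodule.mkQ_surjective _)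
    intro y
    obtain ⟨x, rfl⟩ := this y
    exact ⟨⟨x.1, x.2⟩, rfl⟩
  · intro x
    change q0 ⟨x.1, x.2⟩ = 0 ↔ _
    refine (LinearEquiv.map_eq_zero_iff S.moduleCatHomologyIso.toLinearEquiv.symm).trans ?_
    refine (Submodule.Quotient.mk_eq_zero (LinearMap.range S.moduleCatToCycles)).trans ?_
    constructor
    · rintro ⟨z, hz⟩
      exact ⟨z, congrArg Subtype.val hz⟩
    · rintro ⟨z, hz⟩
      exact ⟨z, Subtype.ext hz⟩

lemma cyclic_equiv {H : Type} [AddCommGroup H] (n : ℕ) (a : H) (gen : ∀ x : H, ∃ m : ℤ, m • a = x)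
    (ord : ∀ m : ℤ, m • a = 0 ↔ (n : ℤ) ∣ m) : Nonempty (H ≃+ ZMod n) := by
  let L : ℤ →+ H := zmultiplesHom H a
  let C : ℤ →+ ZMod n := Int.castAddHom (ZMod n)
  have hL : Function.Surjective L := gen
  have hC : Function.Surjective C := ZMod.intCast_surjective
  have hk : L.ker = C.ker := by
    ext m
    rw [AddMonoidHom.mem_ker, AddMonoidHom.mem_ker]
    exact (ord m).trans (ZMod.intCast_zmod_eq_zero_iff_dvd m n).symm
  exact ⟨(QuotientAddGroup.quotientKerEquivOfSurjective L hL).symm.trans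
    ((QuotientAddGroup.quotientAddEquivOfEq hk).trans
      (QuotientAddGroup.quotientKerEquivOfSurjective C hC))⟩

lemma toLin {M N : Type} [AddCommGroup M] [AddCommGroup N] (i1 : Module ℤ M) (i2 : Module ℤ N)
    (e : M ≃+ N) : Nonempty (M ≃ₗ[ℤ] N) :=
  ⟨e.toEquiv.toLinearEquiv ⟨e.map_add, fun m x => by
    have h1 := int_smul_eq_zsmul i1 m x
    have h2 := int_smul_eq_zsmul i2 m (e x)
    exact (congrArg e h1).trans ((map_zsmul e m x).trans h2.symm)⟩⟩

variable {X : Type} [TopologicalSpace X]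

/-- additive boundary -/
noncomputable def dd (X : Type) [TopologicalSpace X] (n : ℕ) : (Kc X).X (n+1) →+ (Kc X).X n :=
  ((Kc X).d (n+1) n).hom.toAddMonoidHom

/-- additive lift -/
noncomputable def alft {n : ℕ} {A : Type} [AddCommGroup A] (g : Sn X n → A) : (Kc X).X n →+ A :=
  (lft g).toAddMonoidHom

lemma alft_bs {n : ℕ} {A : Type} [AddCommGroup A] (g : Sn X n → A) (p : Sn X n) :
    alft g (bs p) = g p := lft_bs g p

lemma aext_bs {n : ℕ} {A : Type} [AddCommGroup A] (f g : (Kc X).X n →+ A)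
    (h : ∀ p, f (bs p) = g (bs p)) : f = g := by
  apply Finsupp.addHom_ext (M := ℤ) (α := Sn X n) (N := A)
  intro p m
  have := h p
  have e : (Finsupp.single p m : Sn X n →₀ ℤ) = m • (Finsupp.single p (1:ℤ) : Sn X n →₀ ℤ) := by
    rw [Finsupp.smul_single]; simp
  rw [e]
  have h1 := map_zsmul (f : (Sn X n →₀ ℤ) →+ A) m (Finsupp.single p (1:ℤ))
  have h2 := map_zsmul (g : (Sn X n →₀ ℤ) →+ A) m (Finsupp.single p (1:ℤ))
  refine h1.trans (Eq.trans ?_ h2.symm)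
  exact congrArg (fun y => m • y) this

lemma d2_sq2 (h : C(I × I, X)) :
    dd X 1 (bs (sq2 h)) = bs (pS (h.comp ⟨fun s => (1, s), by fun_prop⟩)) -
      bs (pS (h.comp ⟨fun s => (s, s), by fun_prop⟩)) +
      bs (pS (h.comp ⟨fun s => (s, 0), by fun_prop⟩)) := by
  change ((Kc X).d 2 1).hom (bs (sq2 h)) = _
  rw [d_bs, Fin.sum_univ_three, ← face0, ← face1, ← face2, pS_pP, pS_pP, pS_pP]
  simp
  abel

lemma d1_bs (p : Sn X 1) :
    dd X 0 (bs p) = bs (tp (pP p 1)) - bs (tp (pP p 0)) := by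
  change ((Kc X).d 1 0).hom (bs p) = _
  rw [d_bs, Fin.sum_univ_two, ← pt_δ0, ← pt_δ1, tp_pt, tp_pt]
  simp
  abel

/-- the universal cocycle -/
noncomputable def univCoc (X : Type) [TopologicalSpace X] :
    Coc X ((Kc X).X 1 ⧸ (dd X 1).range) where
  φ γ := QuotientAddGroup.mk' _ (bs (pS γ))
  tri h := by
    rw [← sub_eq_zero, ← map_add, ← map_sub]
    rw [← AddMonoidHom.mem_ker, QuotientAddGroup.ker_mk']
    refine ⟨bs (sq2 h), ?_⟩
    rw [d2_sq2]
    abel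

lemma pt_tp (x : X) : pt (tp x) = x := by
  simp [pt, tp]

theorem chains_desc (n : ℕ) (a : C(I, X)) (hloop : a 0 = a 1)
    (hrel : ∀ (A : Type) [AddCommGroup A] (c : Coc X A), n • c.φ a = 0)
    (hgen : ∀ (A : Type) [AddCommGroup A] (c : Coc X A), c.φ a = 0 → ∃ f, c.Pot Set.univ f)
    {A0 : Type} [AddCommGroup A0] (ψ : Coc X A0) (hψ : addOrderOf (ψ.φ a) = n) :
    dd X 0 (bs (pS a)) = 0 ∧ (∀ x, dd X 0 x = 0 → ∃ (m : ℤ) (z : _), dd X 1 z = x - m • bs (pS a)) ∧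
      ∀ m : ℤ, (∃ z, dd X 1 z = m • bs (pS a)) ↔ (n : ℤ) ∣ m := by
  refine ⟨?_, ?_, ?_⟩
  · rw [d1_bs, pP_pS, hloop, sub_self]
  · intro x hx
    let N := AddSubgroup.zmultiples ((univCoc X).φ a)
    let c' := (univCoc X).push (QuotientAddGroup.mk' N)
    obtain ⟨f, hf⟩ := hgen _ c' (by
      change (univCoc X).φ a ∈ (QuotientAddGroup.mk' N).ker
      rw [QuotientAddGroup.ker_mk']
      exact AddSubgroup.mem_zmultiples _)
    have heq : (QuotientAddGroup.mk' N).comp (QuotientAddGroup.mk' (dd X 1).range) =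
        (alft (fun p : Sn X 0 => f (pt p))).comp (dd X 0) := by
      apply aext_bs
      intro p
      rw [AddMonoidHom.comp_apply, AddMonoidHom.comp_apply, d1_bs, map_sub, alft_bs, alft_bs,
        pt_tp, pt_tp]
      have := hf (pP p) (fun _ => trivial)
      rw [← this]
      change _ = (QuotientAddGroup.mk' N) (QuotientAddGroup.mk' _ (bs (pS (pP p))))
      rw [pS_pP]
    have h2 := DFunLike.congr_fun heq x
    rw [AddMonoidHom.comp_apply, AddMonoidHom.comp_apply, hx, map_zero, ← AddMonoidHom.mem_ker,
      QuotientAddGroup.ker_mk', AddSubgroup.mem_zmultiples_iff] at h2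
    obtain ⟨m, hm⟩ := h2
    refine ⟨m, ?_⟩
    change _ ∈ (dd X 1).range
    rw [← QuotientAddGroup.ker_mk' (dd X 1).range, AddMonoidHom.mem_ker, map_sub, ← hm]
    rw [sub_eq_zero]
    exact (map_zsmul (QuotientAddGroup.mk' (dd X 1).range) m (bs (pS a))).symm
  · intro m
    constructor
    · rintro ⟨z, hz⟩
      have h0 : (alft (fun p : Sn X 1 => ψ.φ (pP p))).comp (dd X 1) = 0 := by
        apply aext_bs
        intro p
        rw [← sq2_surj p, AddMonoidHom.comp_apply, d2_sq2, map_add, map_sub, alft_bs, alft_bs,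
          alft_bs, pP_pS, pP_pS, pP_pS, ← ψ.tri]
        simp
      have h1 := DFunLike.congr_fun h0 z
      rw [AddMonoidHom.comp_apply, hz, map_zsmul, alft_bs, pP_pS] at h1
      rw [← hψ]
      exact addOrderOf_dvd_iff_zsmul_eq_zero.2 h1
    · rintro ⟨j, rfl⟩
      have := hrel _ (univCoc X)
      change (_ : (Kc X).X 1) ∈ (dd X 1).range
      rw [mul_comm, mul_smul]
      refine AddSubgroup.zsmul_mem _ ?_ _
      rw [← QuotientAddGroup.ker_mk' (dd X 1).range, AddMonoidHom.mem_ker, map_zsmul, natCast_zsmul]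
      exact this

theorem theoremH (n : ℕ) (a : C(I, X)) (hloop : a 0 = a 1)
    (hrel : ∀ (A : Type) [AddCommGroup A] (c : Coc X A), n • c.φ a = 0)
    (hgen : ∀ (A : Type) [AddCommGroup A] (c : Coc X A), c.φ a = 0 → ∃ f, c.Pot Set.univ f)
    {A0 : Type} [AddCommGroup A0] (ψ : Coc X A0) (hψ : addOrderOf (ψ.φ a) = n) :
    Nonempty (SingularHomology ℤ 1 X ≃ₗ[ℤ] ZMod n) := by
  have iso : SingularHomology ℤ 1 X ≅ ((Kc X).sc' 2 1 0).homology :=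
    (Kc X).homologyIsoSc' 2 1 0 (by simp) (by simp)
  have key : Nonempty (((Kc X).sc' 2 1 0).homology ≃+ ZMod n) := by
    obtain ⟨h1, h2, h3⟩ := chains_desc n a hloop hrel hgen ψ hψ
    obtain ⟨q, hq, hq0⟩ := homology_desc ((Kc X).sc' 2 1 0)
    let a' : ((Kc X).sc' 2 1 0).g.hom.toAddMonoidHom.ker := ⟨bs (pS a), h1⟩
    refine cyclic_equiv n (q a') ?_ ?_
    · intro y
      obtain ⟨x, rfl⟩ := hq y
      obtain ⟨m, z, hz⟩ := h2 x.1 x.2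
      refine ⟨m, ?_⟩
      rw [← map_zsmul, eq_comm, ← sub_eq_zero, ← map_sub, hq0]
      exact ⟨z, hz⟩
    · intro m
      rw [← map_zsmul, hq0, ← h3 m]
      rfl
  obtain ⟨e⟩ := key
  exact toLin _ _ (iso.toLinearEquiv.toAddEquiv.trans e)

end CfgH


open CategoryTheory
open unitInterval Topology

namespace CfgH

theorem coc_of_covering {E Y A : Type} [TopologicalSpace E] [TopologicalSpace Y] [AddCommGroup A]
    [AddAction A E] (p : C(E, Y)) (hp : IsAddQuotientCoveringMap p A) :
    ∃ c : Coc Y A, ∀ (Γ : C(I, E)) (m : A), Γ 1 = m +ᵥ Γ 0 → c.φ (p.comp Γ) = m := by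
  have cov : IsCoveringMap p := hp.isCoveringMap
  have hfree := hp.isCancelVAdd
  have hcont := hp.toContinuousConstVAdd
  choose s hs using hp.surjective
  have hex : ∀ e, ∃ g : A, e = g +ᵥ s (p e) := by
    intro e
    obtain ⟨g, hg⟩ := (hp.apply_eq_iff_mem_orbit (e₁ := e) (e₂ := s (p e))).1 (hs _).symm
    exact ⟨g, hg.symm⟩
  choose d hd using hex
  have hdu : ∀ e g, e = g +ᵥ s (p e) → d e = g := by
    intro e g h
    have h2 := hd e
    exact IsCancelVAdd.right_cancel _ _ (s (p e)) (h2.symm.trans h)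
  have hdv : ∀ e g, d (g +ᵥ e) = g + d e := by
    intro e g
    apply hdu
    rw [hp.map_vadd, add_vadd, ← hd]
  let φ : C(I, Y) → A := fun γ => d (cov.liftPath γ (s (γ 0)) (hs _).symm 1)
  have K : ∀ Γ : C(I, E), φ (p.comp Γ) = d (Γ 1) - d (Γ 0) := by
    intro Γ
    let Γ' : C(I, E) := ⟨fun t => (-(d (Γ 0))) +ᵥ Γ t, by
      exact (hcont.continuous_const_vadd _).comp Γ.continuous⟩
    have h1 : Γ' = cov.liftPath (p.comp Γ) (s (p.comp Γ 0)) (hs _).symm := by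
      rw [cov.eq_liftPath_iff']
      constructor
      · ext t
        exact hp.map_vadd _
      · change -(d (Γ 0)) +ᵥ Γ 0 = s (p (Γ 0))
        rw [neg_vadd_eq_iff]
        exact hd _
    change d (cov.liftPath (p.comp Γ) (s (p.comp Γ 0)) (hs _).symm 1) = _
    rw [← h1]
    change d (-(d (Γ 0)) +ᵥ Γ 1) = _
    rw [hdv]; abel
  refine ⟨⟨φ, ?_⟩, ?_⟩
  · intro h
    let f := cov.liftPath (h.comp ⟨fun s => (0, s), by fun_prop⟩) (s (h (0, 0))) (hs _).symm
    let H := cov.liftHomotopy h f (fun a =>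
      (congr_fun (cov.liftPath_lifts (h.comp ⟨fun s => (0, s), by fun_prop⟩) (s (h (0, 0))) (hs _).symm) a).symm)
    have hH : p.comp H = h := by
      ext x
      exact congr_fun (cov.liftHomotopy_lifts _ _ _) x
    rw [← hH, ContinuousMap.comp_assoc, ContinuousMap.comp_assoc, ContinuousMap.comp_assoc, K, K, K]
    simp
  · intro Γ m hm
    change φ (p.comp Γ) = m
    rw [K, hm, hdv]
    abel

/-- winding number cocycle -/
theorem winding : ∃ w : Coc {z : ℂ // z ≠ 0} ℤ, ∀ (Γ : C(I, ℂ)) (γ : C(I, {z : ℂ // z ≠ 0})) (m : ℤ),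
    (∀ t, (γ t : ℂ) = Complex.exp (Γ t)) → Γ 1 = Γ 0 + m * (2 * Real.pi * Complex.I) →
      w.φ γ = m := by
  let p : C(ℂ, {z : ℂ // z ≠ 0}) := ⟨fun z : ℂ ↦ ⟨_, z.exp_ne_zero⟩, by fun_prop⟩
  obtain ⟨c, hc⟩ := coc_of_covering p Complex.isAddQuotientCoveringMap_exp
  let a0 : ℂ := 2 * Real.pi * Complex.I
  have ha0 : a0 ≠ 0 := Complex.two_pi_I_ne_zero
  have hex : ∀ x : AddSubgroup.zmultiples a0, ∃ m : ℤ, (m:ℂ) * a0 = x := by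
    rintro ⟨x, m, rfl⟩
    exact ⟨m, by simp⟩
  choose k hk using hex
  have hku : ∀ (x : AddSubgroup.zmultiples a0) (m : ℤ), (m:ℂ) * a0 = (x:ℂ) → k x = m := by
    intro x m h
    have := (hk x).trans h.symm
    exact_mod_cast mul_right_cancel₀ ha0 this
  let g : AddSubgroup.zmultiples a0 →+ ℤ := ⟨⟨k, hku _ _ (by simp)⟩, fun x y => hku _ _ (by
    push_cast
    rw [add_mul, hk, hk])⟩
  refine ⟨c.push g, fun Γ γ m h1 h2 => ?_⟩
  have e : γ = p.comp Γ := by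
    ext t
    exact h1 t
  let m' : AddSubgroup.zmultiples a0 := ⟨m * a0, ⟨m, by simp⟩⟩
  have := hc Γ m' (by
    rw [h2]
    change _ = (m:ℂ) * a0 + Γ 0
    rw [add_comm])
  change g (c.φ γ) = m
  rw [e, this]
  exact hku _ _ rfl

end CfgH


open CategoryTheory
open unitInterval Topology

namespace CfgH

/-- ordered configurations -/
abbrev Fk (M : Type) (k : ℕ) : Type := {f : Fin k → M // Function.Injective f}

section basics
variable {M N : Type} [TopologicalSpace M] [TopologicalSpace N] {k : ℕ}

/-- projection to unordered configurations -/
def pr (f : Fk M k) : UnordConfigSpace M k := Quotient.mk (configSetoid M k) f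

lemma pr_eq {f g : Fk M k} : pr f = pr g ↔ ∃ p : Equiv.Perm (Fin k), f.1 ∘ p = g.1 :=
  Quotient.eq (r := configSetoid M k)

lemma pr_surj : Function.Surjective (pr : Fk M k → UnordConfigSpace M k) := Quotient.mk_surjective

lemma continuous_pr : Continuous (pr : Fk M k → UnordConfigSpace M k) := continuous_quotient_mk'

lemma isQuotientMap_pr : IsQuotientMap (pr : Fk M k → UnordConfigSpace M k) :=
  isQuotientMap_quotient_mk'

/-- relblel -/
def relbl (p : Equiv.Perm (Fin k)) (f : Fk M k) : Fk M k := ⟨f.1 ∘ p, f.2.comp p.injective⟩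

lemma pr_relbl (p : Equiv.Perm (Fin k)) (f : Fk M k) : pr (relbl p f) = pr f :=
  (pr_eq.2 ⟨p, rfl⟩).symm

lemma continuous_relbl (p : Equiv.Perm (Fin k)) : Continuous (relbl p : Fk M k → Fk M k) := by
  refine Continuous.subtype_mk ?_ _
  exact continuous_pi fun i => (continuous_apply (p i)).comp continuous_subtype_val

lemma isOpenMap_pr : IsOpenMap (pr : Fk M k → UnordConfigSpace M k) := by
  intro U hU
  rw [← isQuotientMap_pr.isOpen_preimage]
  have : pr ⁻¹' (pr '' U) = ⋃ p : Equiv.Perm (Fin k), (relbl p : Fk M k → Fk M k) ⁻¹' U := by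
    ext f
    simp only [Set.mem_preimage, Set.mem_image, Set.mem_iUnion]
    constructor
    · rintro ⟨g, hg, h⟩
      obtain ⟨p, hp⟩ := pr_eq.1 h.symm
      refine ⟨p, ?_⟩
      have : relbl p f = g := Subtype.ext hp
      rwa [this]
    · rintro ⟨p, hp⟩
      exact ⟨_, hp, pr_relbl p f⟩
  rw [this]
  exact isOpen_iUnion fun p => hU.preimage (continuous_relbl p)

/-- continuous families of configurations -/
def mkC {T : Type} [TopologicalSpace T] (f : T → Fin k → M) (hc : Continuous f)
    (hi : ∀ t, Function.Injective (f t)) : C(T, UnordConfigSpace M k) :=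
  ⟨fun t => pr ⟨f t, hi t⟩, continuous_pr.comp (hc.subtype_mk _)⟩

/-- functoriality for ordered configurations -/
def mapF (e : M → N) (he : Function.Injective e) (f : Fk M k) : Fk N k := ⟨e ∘ f.1, he.comp f.2⟩

lemma continuous_mapF (e : C(M, N)) (he : Function.Injective e) :
    Continuous (mapF e he : Fk M k → Fk N k) := by
  refine Continuous.subtype_mk ?_ _
  exact continuous_pi fun i => e.continuous.comp ((continuous_apply i).comp continuous_subtype_val)

/-- functoriality -/
def mapC (e : C(M, N)) (he : Function.Injective e) : C(UnordConfigSpace M k, UnordConfigSpace N k) :=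
  ⟨Quotient.lift (fun f : Fk M k => pr (mapF e he f)) (by
    rintro f g ⟨p, hp⟩
    apply pr_eq.2
    refine ⟨p, ?_⟩
    change e ∘ f.1 ∘ p = e ∘ g.1
    rw [hp]), (continuous_pr.comp (continuous_mapF e he)).quotient_lift _⟩

lemma mapC_pr (e : C(M, N)) (he : Function.Injective e) (f : Fk M k) :
    mapC e he (pr f) = pr (mapF e he f) := rfl

lemma mapC_inj (e : C(M, N)) (he : Function.Injective e) :
    Function.Injective (mapC e he : UnordConfigSpace M k → UnordConfigSpace N k) := by
  intro x y h
  obtain ⟨f, rfl⟩ := pr_surj x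
  obtain ⟨g, rfl⟩ := pr_surj y
  rw [mapC_pr, mapC_pr, pr_eq] at h
  obtain ⟨p, hp⟩ := h
  refine pr_eq.2 ⟨p, ?_⟩
  ext i
  exact he (congr_fun hp i)

lemma isOpenEmbedding_mapF (e : C(M, N)) (he : IsOpenEmbedding e) :
    IsOpenEmbedding (mapF e he.injective : Fk M k → Fk N k) := by
  refine ⟨?_, ?_⟩
  · have h1 : IsEmbedding (fun f : Fin k → M => e ∘ f) :=
      IsEmbedding.piMap (f := fun _ : Fin k => e) (fun _ => he.isEmbedding)
    have h2 : IsEmbedding (fun f : Fk M k => e ∘ f.1) := h1.comp IsEmbedding.subtypeVal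
    exact IsEmbedding.of_comp (continuous_mapF e he.injective) continuous_subtype_val h2
  · have : Set.range (mapF e he.injective : Fk M k → Fk N k) = ⋂ i, {g : Fk N k | g.1 i ∈ Set.range e} := by
      ext g
      simp only [Set.mem_range, Set.mem_iInter, Set.mem_ofPred_eq]
      constructor
      · rintro ⟨f, rfl⟩ i
        exact ⟨f.1 i, rfl⟩
      · intro h
        choose f hf using h
        refine ⟨⟨f, fun i j hij => g.2 ?_⟩, ?_⟩
        · rw [← hf, ← hf, hij]
        · apply Subtype.ext
          ext i
          exact hf i
    rw [this]
    exact isOpen_iInter_of_finite fun i =>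
      he.isOpen_range.preimage ((continuous_apply i).comp continuous_subtype_val)

lemma isOpenEmbedding_mapC (e : C(M, N)) (he : IsOpenEmbedding e) :
    IsOpenEmbedding (mapC e he.injective : UnordConfigSpace M k → UnordConfigSpace N k) := by
  refine IsOpenEmbedding.of_continuous_injective_isOpenMap (mapC e _).continuous (mapC_inj _ _) ?_
  intro U hU
  have : mapC e he.injective '' U =
      pr '' (mapF e he.injective '' ((pr : Fk M k → UnordConfigSpace M k) ⁻¹' U)) := by
    ext y
    constructor
    · rintro ⟨x, hx, rfl⟩
      obtain ⟨f, rfl⟩ := pr_surj x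
      exact ⟨_, ⟨f, hx, rfl⟩, rfl⟩
    · rintro ⟨_, ⟨f, hf, rfl⟩, rfl⟩
      exact ⟨pr f, hf, rfl⟩
  rw [this]
  exact isOpenMap_pr _ ((isOpenEmbedding_mapF e he).isOpenMap _ (hU.preimage continuous_pr))

end basics

/-- Path connectedness of ordered configuration spaces of the complement of a finite set. -/
lemma joined_Fk (k : ℕ) (B : Set ℂ) (hB : B.Finite) (x y : Fk ℂ k) (hx : ∀ i, x.1 i ∉ B)
    (hy : ∀ i, y.1 i ∉ B) : ∃ γ : C(I, Fk ℂ k), γ 0 = x ∧ γ 1 = y ∧ ∀ t i, (γ t).1 i ∉ B := by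
  let ln : ℂ → Fin k → ℂ := fun t i => x.1 i + t * (y.1 i - x.1 i)
  have lnc : Continuous ln := by fun_prop
  have aff : ∀ a b : ℂ, (a ≠ 0 ∨ b ≠ 0) → {t : ℂ | a + t * b = 0}.Subsingleton := by
    intro a b hab t ht s hs
    simp only [Set.mem_ofPred_eq] at ht hs
    have h : (t - s) * b = 0 := by linear_combination ht - hs
    rcases mul_eq_zero.1 h with h | h
    · exact sub_eq_zero.1 h
    · exfalso
      rw [h] at ht
      rcases hab with h1 | h1
      · apply h1; simpa using ht
      · exact h1 h
  let bad : Set ℂ := (⋃ i, ⋃ j, {t : ℂ | i ≠ j ∧ ln t i = ln t j}) ∪ (⋃ i, ⋃ b ∈ B, {t : ℂ | ln t i = b})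
  have hbad : bad.Countable := by
    refine Set.Countable.union ?_ ?_
    · refine Set.countable_iUnion fun i => Set.countable_iUnion fun j => ?_
      by_cases hij : i = j
      · simp [hij]
      · refine Set.Subsingleton.countable ?_
        refine (aff (x.1 i - x.1 j) ((y.1 i - x.1 i) - (y.1 j - x.1 j))
          (Or.inl (sub_ne_zero.2 (fun h => hij (x.2 h))))).anti ?_
        rintro t ⟨_, ht⟩
        simp only [ln] at ht
        simp only [Set.mem_ofPred_eq]
        linear_combination ht
    · refine Set.countable_iUnion fun i => hB.countable.biUnion fun b hb => ?_
      refine Set.Subsingleton.countable ?_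
      refine (aff (x.1 i - b) (y.1 i - x.1 i) (Or.inl (sub_ne_zero.2 (fun h => hx i (h ▸ hb))))).anti ?_
      intro t ht
      simp only [ln, Set.mem_ofPred_eq] at ht
      simp only [Set.mem_ofPred_eq]
      linear_combination ht
  have hpc : IsPathConnected badᶜ :=
    hbad.isPathConnected_compl_of_one_lt_rank (by rw [Complex.rank_real_complex]; norm_num)
  have h0 : (0:ℂ) ∈ badᶜ := by
    intro h
    rcases h with h | h
    · simp only [Set.mem_iUnion, ln] at h
      obtain ⟨i, j, hij, h⟩ := h
      exact hij (x.2 (by simpa using h))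
    · simp only [Set.mem_iUnion, ln] at h
      obtain ⟨i, b, hb, h⟩ := h
      apply hx i
      have : x.1 i = b := by simpa using h
      rwa [this]
  have h1 : (1:ℂ) ∈ badᶜ := by
    intro h
    rcases h with h | h
    · simp only [Set.mem_iUnion, ln] at h
      obtain ⟨i, j, hij, h⟩ := h
      exact hij (y.2 (by simpa using h))
    · simp only [Set.mem_iUnion, ln] at h
      obtain ⟨i, b, hb, h⟩ := h
      apply hy i
      have : y.1 i = b := by simpa using h
      rwa [this]
  obtain ⟨p, hp⟩ := hpc.joinedIn 0 h0 1 h1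
  have hinj : ∀ t, Function.Injective (ln (p t)) := by
    intro t i j hij
    by_contra hne
    exact hp t (Or.inl (Set.mem_iUnion.2 ⟨i, Set.mem_iUnion.2 ⟨j, hne, hij⟩⟩))
  refine ⟨⟨fun t => ⟨ln (p t), hinj t⟩, ?_⟩, ?_, ?_, ?_⟩
  · exact (lnc.comp p.continuous).subtype_mk _
  · apply Subtype.ext
    ext i
    simp [ln]
  · apply Subtype.ext
    ext i
    simp [ln]
  · intro t i hb
    refine hp t (Or.inr (Set.mem_iUnion.2 ⟨i, Set.mem_iUnion.2 ⟨_, Set.mem_iUnion.2 ⟨hb, rfl⟩⟩⟩))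

end CfgH


open CategoryTheory
open unitInterval Topology

namespace CfgH

section swaps
variable {k : ℕ} {A : Type} [AddCommGroup A]

/-- the tuple with the pair `i j` placed symmetrically around `w i` -/
def Tt (w : Fin k → ℂ) (i j : Fin k) (ρ : ℂ) : Fin k → ℂ :=
  fun l => if l = i then w i + ρ else if l = j then w i - ρ else w l

lemma Tt_i (w : Fin k → ℂ) (i j : Fin k) (ρ : ℂ) : Tt w i j ρ i = w i + ρ := if_pos rfl

lemma Tt_j (w : Fin k → ℂ) {i j : Fin k} (hij : i ≠ j) (ρ : ℂ) : Tt w i j ρ j = w i - ρ := by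
  simp [Tt, hij.symm]

lemma Tt_l (w : Fin k → ℂ) {i j l : Fin k} (h1 : l ≠ i) (h2 : l ≠ j) (ρ : ℂ) :
    Tt w i j ρ l = w l := by
  simp [Tt, h1, h2]

lemma continuous_Tt {T : Type} [TopologicalSpace T] (i j : Fin k) (w : T → Fin k → ℂ) (ρ : T → ℂ)
    (hw : Continuous w) (hρ : Continuous ρ) : Continuous fun t => Tt (w t) i j (ρ t) := by
  refine continuous_pi fun l => ?_
  have h := fun l => (continuous_apply l).comp hw
  unfold Tt
  split_ifs
  · exact (h i).add hρ
  · exact (h i).sub hρ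
  · exact h l

lemma Tt_inj (w : Fin k → ℂ) (hw : Function.Injective w) {i j : Fin k} (hij : i ≠ j) {ρ : ℂ}
    (hρ : ρ ≠ 0) (h : ∀ l, l ≠ i → l ≠ j → w l ≠ w i + ρ ∧ w l ≠ w i - ρ) :
    Function.Injective (Tt w i j ρ) := by
  intro a b hab
  have hne : w i + ρ ≠ w i - ρ := by
    intro h
    apply hρ
    have : 2 * ρ = 0 := by linear_combination h
    simpa using this
  have key : ∀ c : Fin k, (c = i ∧ Tt w i j ρ c = w i + ρ) ∨ (c = j ∧ Tt w i j ρ c = w i - ρ) ∨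
      ((c ≠ i ∧ c ≠ j) ∧ Tt w i j ρ c = w c) := by
    intro c
    by_cases h1 : c = i
    · exact Or.inl ⟨h1, by rw [h1, Tt_i]⟩
    by_cases h2 : c = j
    · exact Or.inr (Or.inl ⟨h2, by rw [h2, Tt_j w hij]⟩)
    exact Or.inr (Or.inr ⟨⟨h1, h2⟩, Tt_l w h1 h2 ρ⟩)
  rcases key a with ⟨h1, e1⟩ | ⟨h1, e1⟩ | ⟨h1, e1⟩ <;>
  rcases key b with ⟨h2, e2⟩ | ⟨h2, e2⟩ | ⟨h2, e2⟩ <;> rw [e1, e2] at hab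
  · rw [h1, h2]
  · exact absurd hab hne
  · exact absurd hab.symm (h b h2.1 h2.2).1
  · exact absurd hab.symm hne
  · rw [h1, h2]
  · exact absurd hab.symm (h b h2.1 h2.2).2
  · exact absurd hab (h a h1.1 h1.2).1
  · exact absurd hab (h a h1.1 h1.2).2
  · exact hw hab

lemma Tt_neg (w : Fin k → ℂ) {i j : Fin k} (hij : i ≠ j) (ρ : ℂ) :
    Tt w i j ρ ∘ Equiv.swap i j = Tt w i j (-ρ) := by
  ext l
  simp only [Function.comp_apply]
  by_cases h1 : l = i
  · subst h1; rw [Equiv.swap_apply_left, Tt_j _ hij, Tt_i]; ring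
  by_cases h2 : l = j
  · subst h2; rw [Equiv.swap_apply_right, Tt_i, Tt_j _ hij]; ring
  rw [Equiv.swap_apply_of_ne_of_ne h1 h2, Tt_l _ h1 h2, Tt_l _ h1 h2]

/-- admissible swap data -/
def Ok (w : Fin k → ℂ) (i j : Fin k) (ρ : ℂ) : Prop :=
  ρ ≠ 0 ∧ ∀ l, l ≠ i → l ≠ j → ‖ρ‖ < ‖w l - w i‖

lemma Ok.inj {w : Fk ℂ k} {i j : Fin k} (hij : i ≠ j) {ρ : ℂ} (h : Ok w.1 i j ρ) :
    Function.Injective (Tt w.1 i j ρ) := by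
  refine Tt_inj _ w.2 hij h.1 fun l h1 h2 => ?_
  have := h.2 l h1 h2
  constructor
  · intro h; rw [h] at this; simp at this
  · intro h; rw [h] at this; simp at this

lemma Ok.rot {w : Fin k → ℂ} {i j : Fin k} {ρ : ℂ} (h : Ok w i j ρ) (x : ℝ) :
    Ok w i j (ρ * Complex.exp (x * Complex.I)) := by
  refine ⟨mul_ne_zero h.1 (Complex.exp_ne_zero _), fun l h1 h2 => ?_⟩
  rw [norm_mul, Complex.norm_exp_ofReal_mul_I, mul_one]
  exact h.2 l h1 h2

/-- the half-rotation loop -/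
noncomputable def swapL (w : Fk ℂ k) (i j : Fin k) (hij : i ≠ j) (ρ : ℂ) (h : Ok w.1 i j ρ) :
    C(I, UnordConfigSpace ℂ k) :=
  mkC (fun t : I => Tt w.1 i j (ρ * Complex.exp (((Real.pi * t : ℝ) : ℂ) * Complex.I)))
    (continuous_Tt _ _ _ _ continuous_const (by fun_prop)) (fun t => (h.rot _).inj hij)

lemma swap_homotopy (c : Coc (UnordConfigSpace ℂ k) A) (i j : Fin k) (hij : i ≠ j)
    (W : C(I, Fk ℂ k)) (P : C(I, ℂ)) (h : ∀ s, Ok (W s).1 i j (P s)) :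
    c.φ (swapL (W 0) i j hij (P 0) (h 0)) = c.φ (swapL (W 1) i j hij (P 1) (h 1)) := by
  let H : C(I × I, UnordConfigSpace ℂ k) :=
    mkC (fun p : I × I => Tt (W p.1).1 i j (P p.1 * Complex.exp (((Real.pi * p.2 : ℝ) : ℂ) * Complex.I)))
    (continuous_Tt _ _ _ _ (continuous_subtype_val.comp (W.continuous.comp continuous_fst))
      (by fun_prop)) (fun t => ((h _).rot _).inj hij)
  refine c.free H fun s => ?_
  apply pr_eq.2
  refine ⟨Equiv.swap i j, ?_⟩
  change Tt _ i j _ ∘ _ = Tt _ i j _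
  rw [Tt_neg _ hij]
  congr 1
  simp [Complex.exp_pi_mul_I]

/-- a safe radius -/
noncomputable def rad (i : Fin k) (w : Fin k → ℂ) : ℝ := (1 + ∑ l, ‖w l - w i‖⁻¹)⁻¹

lemma rad_den_pos (i : Fin k) (w : Fin k → ℂ) : 0 < 1 + ∑ l, ‖w l - w i‖⁻¹ := by positivity

lemma rad_pos (i : Fin k) (w : Fin k → ℂ) : 0 < rad i w := inv_pos.2 (rad_den_pos i w)

lemma rad_lt (i l : Fin k) (w : Fk ℂ k) (h : l ≠ i) : rad i w.1 < ‖w.1 l - w.1 i‖ := by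
  have hd : 0 < ‖w.1 l - w.1 i‖ := norm_pos_iff.2 (sub_ne_zero.2 fun e => h (w.2 e))
  unfold rad
  rw [inv_lt_comm₀ (rad_den_pos _ _) hd]
  have := Finset.single_le_sum (f := fun l => ‖w.1 l - w.1 i‖⁻¹) (fun x _ => by positivity)
    (Finset.mem_univ l)
  linarith

lemma continuous_rad (i : Fin k) : Continuous fun w : Fk ℂ k => rad i w.1 := by
  unfold rad
  refine Continuous.inv₀ ?_ (fun w => (rad_den_pos i w.1).ne')
  refine continuous_const.add (continuous_finsetSum _ fun l _ => ?_)
  by_cases h : l = i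
  · simp only [h, sub_self, norm_zero, inv_zero]; exact continuous_const
  · refine Continuous.inv₀ ?_ (fun w => (norm_pos_iff.2 (sub_ne_zero.2 fun e => h (w.2 e))).ne')
    have := fun l : Fin k => (continuous_apply (A := fun _ => ℂ) l).comp
      (continuous_subtype_val (p := fun f : Fin k → ℂ => Function.Injective f))
    exact ((this l).sub (this i)).norm

lemma ok_rad (i j : Fin k) (w : Fk ℂ k) : Ok w.1 i j ((rad i w.1 : ℝ) : ℂ) := by
  refine ⟨by exact_mod_cast (rad_pos i w.1).ne', fun l h1 _ => ?_⟩
  rw [Complex.norm_real, Real.norm_of_nonneg (rad_pos _ _).le]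
  exact rad_lt i l w h1

lemma swap_eq_rad (c : Coc (UnordConfigSpace ℂ k) A) (i j : Fin k) (hij : i ≠ j)
    (w : Fk ℂ k) (ρ : ℂ) (h : Ok w.1 i j ρ) :
    c.φ (swapL w i j hij ρ h) = c.φ (swapL w i j hij _ (ok_rad i j w)) := by
  set r : ℂ := ((rad i w.1 : ℝ) : ℂ) with hr
  have hrne : r ≠ 0 := (ok_rad i j w).1
  let P : C(I, ℂ) := ⟨fun s => Complex.exp ((1 - (s:ℝ)) * Complex.log ρ + (s:ℝ) * Complex.log r), by
    fun_prop⟩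
  have hP : ∀ s, Ok w.1 i j (P s) := by
    intro s
    refine ⟨Complex.exp_ne_zero _, fun l h1 h2 => ?_⟩
    have a1 := h.2 l h1 h2
    have a2 := (ok_rad i j w).2 l h1 h2
    rw [← hr] at a2
    have hd : 0 < ‖w.1 l - w.1 i‖ := lt_of_le_of_lt (norm_nonneg _) a1
    change ‖Complex.exp _‖ < _
    rw [Complex.norm_exp, ← Real.lt_log_iff_exp_lt hd]
    have b1 : Real.log ‖ρ‖ < Real.log ‖w.1 l - w.1 i‖ :=
      Real.log_lt_log (norm_pos_iff.2 h.1) a1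
    have b2 : Real.log ‖r‖ < Real.log ‖w.1 l - w.1 i‖ :=
      Real.log_lt_log (norm_pos_iff.2 hrne) a2
    have e : ((1 - ((s:ℝ):ℂ)) * Complex.log ρ + ((s:ℝ):ℂ) * Complex.log r).re =
        (1 - (s:ℝ)) * Real.log ‖ρ‖ + s * Real.log ‖r‖ := by
      simp [Complex.log_re]
    rw [e]
    have hs0 := s.2.1
    have hs1 := s.2.2
    rcases eq_or_lt_of_le hs0 with h0 | h0
    · rw [← h0]; simpa using b1
    · nlinarith
  have := swap_homotopy c i j hij (ContinuousMap.const I w) P hP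
  have e0 : P 0 = ρ := by simp [P, Complex.exp_log h.1]
  have e1 : P 1 = r := by simp [P, Complex.exp_log hrne]
  simp only [e0, e1, ContinuousMap.const_apply] at this
  exact this

lemma swap_eq_same (c : Coc (UnordConfigSpace ℂ k) A) (i j : Fin k) (hij : i ≠ j)
    (w w' : Fk ℂ k) (ρ ρ' : ℂ) (h : Ok w.1 i j ρ) (h' : Ok w'.1 i j ρ') :
    c.φ (swapL w i j hij ρ h) = c.φ (swapL w' i j hij ρ' h') := by
  rw [swap_eq_rad, swap_eq_rad c i j hij w']
  obtain ⟨γ, rfl, rfl, _⟩ := joined_Fk k ∅ Set.finite_empty w w' (by simp) (by simp)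
  exact swap_homotopy c i j hij γ
    ⟨fun s => ((rad i (γ s).1 : ℝ) : ℂ), Complex.continuous_ofReal.comp ((continuous_rad i).comp γ.continuous)⟩
    (fun s => ok_rad i j (γ s))

lemma swap_relbl (p : Equiv.Perm (Fin k)) (i j : Fin k) (hij : i ≠ j)
    (w : Fk ℂ k) (ρ : ℂ) (h : Ok w.1 (p i) (p j) ρ) :
    ∃ h' : Ok (relbl p w).1 i j ρ,
      swapL (relbl p w) i j hij ρ h' = swapL w (p i) (p j) (fun e => hij (p.injective e)) ρ h := by
  have h' : Ok (relbl p w).1 i j ρ :=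
    ⟨h.1, fun l h1 h2 => h.2 (p l) (fun e => h1 (p.injective e)) (fun e => h2 (p.injective e))⟩
  refine ⟨h', ?_⟩
  ext t
  symm
  apply pr_eq.2
  refine ⟨p, ?_⟩
  ext l
  simp [Tt, relbl, p.injective.eq_iff]

lemma swap_eq (c : Coc (UnordConfigSpace ℂ k) A) (i j : Fin k) (hij : i ≠ j)
    (i' j' : Fin k) (hij' : i' ≠ j')
    (w w' : Fk ℂ k) (ρ ρ' : ℂ) (h : Ok w.1 i j ρ) (h' : Ok w'.1 i' j' ρ') :
    c.φ (swapL w i j hij ρ h) = c.φ (swapL w' i' j' hij' ρ' h') := by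
  obtain ⟨p, hp1, hp2⟩ : ∃ p : Equiv.Perm (Fin k), p i = i' ∧ p j = j' := by
    refine ⟨(Equiv.swap i i').trans (Equiv.swap (Equiv.swap i i' j) j'), ?_, ?_⟩
    · simp only [Equiv.trans_apply, Equiv.swap_apply_left]
      refine Equiv.swap_apply_of_ne_of_ne ?_ hij'
      intro e
      apply hij
      have : Equiv.swap i i' i = Equiv.swap i i' j := by rw [Equiv.swap_apply_left]; exact e
      exact (Equiv.swap i i').injective this
    · simp
  subst hp1 hp2
  obtain ⟨h2, e⟩ := swap_relbl p i j hij w' ρ' h'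
  rw [← e]
  exact swap_eq_same c i j hij _ _ _ _ _ _

end swaps
end CfgH


open CategoryTheory
open unitInterval Topology

namespace CfgH

section sorted
variable {k : ℕ} {A : Type} [AddCommGroup A]

/-- real linear functionals -/
noncomputable def uu (a : ℝ) : ℂ →ₗ[ℝ] ℝ := Complex.reLm + a • Complex.imLm

lemma uu_apply (a : ℝ) (z : ℂ) : uu a z = z.re + a * z.im := by
  simp [uu]

lemma continuous_uu (a : ℝ) : Continuous (uu a) := by
  have : (uu a : ℂ → ℝ) = fun z => z.re + a * z.im := funext (uu_apply a)
  rw [this]; fun_prop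

lemma uu_le (a : ℝ) (z : ℂ) : |uu a z| ≤ (1 + |a|) * ‖z‖ := by
  rw [uu_apply]
  have h1 := Complex.abs_re_le_norm z
  have h2 := Complex.abs_im_le_norm z
  calc |z.re + a * z.im| ≤ |z.re| + |a * z.im| := abs_add_le _ _
    _ = |z.re| + |a| * |z.im| := by rw [abs_mul]
    _ ≤ _ := by nlinarith [abs_nonneg a]

lemma uu_ext {a b : ℝ} (hab : a ≠ b) {z w : ℂ} (h1 : uu a z = uu a w) (h2 : uu b z = uu b w) :
    z = w := by
  rw [uu_apply, uu_apply] at h1 h2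
  have h3 : (a - b) * (z.im - w.im) = 0 := by linear_combination h1 - h2
  have h4 : z.im = w.im := by
    rcases mul_eq_zero.1 h3 with h | h
    · exact absurd (sub_eq_zero.1 h) hab
    · exact sub_eq_zero.1 h
  refine Complex.ext ?_ h4
  rw [h4] at h1
  linarith

/-- sorted tuples -/
def Srt (k : ℕ) (a : ℝ) : Set (Fin k → ℂ) := {z | StrictMono fun i => uu a (z i)}

lemma Srt_inj {a : ℝ} {z : Fin k → ℂ} (h : z ∈ Srt k a) : Function.Injective z :=
  fun i j hij => (StrictMono.injective h) (by simp only [hij])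

lemma isOpen_Srt (a : ℝ) : IsOpen (Srt k a) := by
  have : Srt k a = ⋂ i, ⋂ j, ⋂ (_ : i < j), {z | uu a (z i) < uu a (z j)} := by
    ext z
    simp only [Srt, Set.mem_iInter, Set.mem_ofPred_eq]
    exact ⟨fun h i j hij => h hij, fun h i j hij => h i j hij⟩
  rw [this]
  refine isOpen_iInter_of_finite fun i => isOpen_iInter_of_finite fun j =>
    isOpen_iInter_of_finite fun _ => ?_
  exact isOpen_lt ((continuous_uu a).comp (continuous_apply i))
    ((continuous_uu a).comp (continuous_apply j))

lemma convex_Srt (a : ℝ) : Convex ℝ (Srt k a) := by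
  intro x hx y hy s t hs ht hst i j hij
  have h1 : uu a (x i) < uu a (x j) := hx hij
  have h2 : uu a (y i) < uu a (y j) := hy hij
  simp only [Pi.add_apply, Pi.smul_apply, map_add, map_smul, smul_eq_mul]
  rcases eq_or_lt_of_le hs with h | h
  · have : t = 1 := by linarith
    rw [← h, this]; simpa using h2
  · have := mul_lt_mul_of_pos_left h1 h
    have := mul_le_mul_of_nonneg_left h2.le ht
    linarith

/-- the standard point -/
lemma std_mem (a : ℝ) : (fun i : Fin k => ((i : ℕ) : ℂ)) ∈ Srt k a := by
  intro i j hij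
  simp [uu_apply]
  exact hij

/-- sorted chart -/
noncomputable def eS (k : ℕ) (a : ℝ) : C(Srt k a, UnordConfigSpace ℂ k) :=
  mkC (fun z => z.1) continuous_subtype_val (fun z => Srt_inj z.2)

lemma eS_open (a : ℝ) : IsOpenEmbedding (eS k a) := by
  refine IsOpenEmbedding.of_continuous_injective_isOpenMap (eS k a).continuous ?_ ?_
  · intro z z' h
    obtain ⟨p, hp⟩ := pr_eq.1 h
    have hp' : ∀ i, z.1 (p i) = z'.1 i := fun i => congr_fun hp i
    have h1 : (fun i => uu a (z.1 i)) = fun i => uu a (z'.1 i) := by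
      rw [← StrictMono.range_inj z.2 z'.2]
      ext x
      constructor
      · rintro ⟨i, rfl⟩
        exact ⟨p.symm i, by simp [← hp']⟩
      · rintro ⟨i, rfl⟩
        exact ⟨p i, by simp [← hp']⟩
    apply Subtype.ext
    ext1 i
    have h2 : p i = i := by
      apply StrictMono.injective z.2
      simp only
      rw [hp', ← congr_fun h1 i]
    rw [← hp', h2]
  · have h1 : IsOpenMap (fun z : Srt k a => (⟨z.1, Srt_inj z.2⟩ : Fk ℂ k)) := by
      have : IsOpenEmbedding (fun z : Srt k a => (⟨z.1, Srt_inj z.2⟩ : Fk ℂ k)) := by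
        refine ⟨IsEmbedding.of_comp (continuous_subtype_val.subtype_mk _) continuous_subtype_val
          (IsEmbedding.subtypeVal (p := fun z => z ∈ Srt k a)), ?_⟩
        have : Set.range (fun z : Srt k a => (⟨z.1, Srt_inj z.2⟩ : Fk ℂ k)) =
            Subtype.val ⁻¹' (Srt k a) := by
          ext z
          constructor
          · rintro ⟨x, rfl⟩; exact x.2
          · intro h; exact ⟨⟨z.1, h⟩, rfl⟩
        rw [this]
        exact (isOpen_Srt a).preimage continuous_subtype_val
      exact this.isOpenMap
    exact isOpenMap_pr.comp h1

/-- chart domains -/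
def WW (k : ℕ) (a : ℝ) : Set (UnordConfigSpace ℂ k) := Set.range (eS k a)

lemma mem_WW {a : ℝ} {z : Fk ℂ k} : pr z ∈ WW k a ↔ Function.Injective fun i => uu a (z.1 i) := by
  constructor
  · rintro ⟨x, hx⟩
    obtain ⟨p, hp⟩ := pr_eq.1 hx
    rw [← hp]
    exact (StrictMono.injective x.2).comp p.injective
  · intro h
    let p := Tuple.sort fun i => uu a (z.1 i)
    have hm : StrictMono ((fun i => uu a (z.1 i)) ∘ p) :=
      (Tuple.monotone_sort _).strictMono_of_injective (h.comp p.injective)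
    exact ⟨⟨z.1 ∘ p, hm⟩, pr_relbl p z⟩

lemma WW_pot (a : ℝ) (c : Coc (UnordConfigSpace ℂ k) A) : ∃ f, c.Pot (WW k a) f :=
  c.pot_embedding (eS k a) (eS_open a).isEmbedding
    (Coc.pot_starConvex (std_mem a) ((convex_Srt a) (std_mem a)) _)

end sorted

end CfgH


open CategoryTheory
open unitInterval Topology

namespace CfgH
section crossing
variable {k : ℕ} {A : Type} [AddCommGroup A]

lemma inj3 {M : Type} (T : Fin k → M) (i j : Fin k) (h : T i ≠ T j)
    (hl : ∀ l, l ≠ i → l ≠ j → T l ≠ T i ∧ T l ≠ T j)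
    (hlm : ∀ l m, l ≠ i → l ≠ j → m ≠ i → m ≠ j → T l = T m → l = m) : Function.Injective T := by
  intro x y hxy
  by_cases x1 : x = i
  · subst x1
    by_cases y1 : y = x
    · exact y1.symm
    by_cases y2 : y = j
    · subst y2; exact absurd hxy h
    exact absurd hxy.symm (hl y y1 y2).1
  by_cases x2 : x = j
  · subst x2
    by_cases y1 : y = i
    · subst y1; exact absurd hxy.symm h
    by_cases y2 : y = x
    · exact y2.symm
    exact absurd hxy.symm (hl y y1 y2).2
  by_cases y1 : y = i
  · subst y1; exact absurd hxy (hl x x1 x2).1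
  by_cases y2 : y = j
  · subst y2; exact absurd hxy (hl x x1 x2).2
  exact hlm x y x1 x2 y1 y2 hxy

lemma Tt_uinj (u : ℂ →ₗ[ℝ] ℝ) (w : Fin k → ℂ) (i j : Fin k) (hij : i ≠ j) (ρ : ℂ) (hρ : u ρ ≠ 0)
    (h2 : ∀ l, l ≠ i → l ≠ j → u (w l) ≠ u (w i) + u ρ ∧ u (w l) ≠ u (w i) - u ρ)
    (h4 : ∀ l m, l ≠ i → l ≠ j → m ≠ i → m ≠ j → u (w l) = u (w m) → l = m) :
    Function.Injective fun l => u (Tt w i j ρ l) := by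
  refine inj3 _ i j ?_ ?_ ?_
  · simp only [Tt_i, Tt_j w hij, map_add, map_sub]
    intro h; apply hρ; linarith
  · intro l l1 l2
    simp only [Tt_i, Tt_j w hij, map_add, map_sub, Tt_l w l1 l2]
    exact h2 l l1 l2
  · intro l m l1 l2 m1 m2
    simp only [Tt_l w l1 l2, Tt_l w m1 m2]
    exact h4 l m l1 l2 m1 m2

lemma slit_not {ρ d : ℂ} (hd : d ≠ 0) (h : ρ / d ∉ Complex.slitPlane) :
    ∃ s : ℝ, 0 ≤ s ∧ ρ = -(s • d) := by
  rw [Complex.mem_slitPlane_iff] at h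
  push Not at h
  refine ⟨-(ρ / d).re, by linarith [h.1], ?_⟩
  have : ρ / d = ((ρ / d).re : ℂ) := Complex.ext (by simp) (by simp [h.2])
  rw [neg_smul, neg_neg, Complex.real_smul, ← this, div_mul_cancel₀ _ hd]

lemma slit_rot {q : ℂ} (hq : q.im < 0) (t : I) :
    q * Complex.exp (((Real.pi * t : ℝ) : ℂ) * Complex.I) ∈ Complex.slitPlane := by
  set θ : ℝ := Real.pi * t
  have hsin : 0 ≤ Real.sin θ := Real.sin_nonneg_of_nonneg_of_le_pi
    (mul_nonneg Real.pi_pos.le t.2.1) (mul_le_of_le_one_right Real.pi_pos.le t.2.2)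
  rw [Complex.mem_slitPlane_iff]
  by_contra! hcon
  obtain ⟨h1, h2⟩ := hcon
  rw [Complex.mul_re, Complex.exp_ofReal_mul_I_re, Complex.exp_ofReal_mul_I_im] at h1
  rw [Complex.mul_im, Complex.exp_ofReal_mul_I_re, Complex.exp_ofReal_mul_I_im] at h2
  have h3 : q.im = -(q.re * Real.cos θ - q.im * Real.sin θ) * Real.sin θ := by
    have := Real.sin_sq_add_cos_sq θ
    linear_combination (-q.im) * this + Real.cos θ * h2
  have : 0 ≤ -(q.re * Real.cos θ - q.im * Real.sin θ) * Real.sin θ :=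
    mul_nonneg (by linarith) hsin
  linarith

/-- crossing lemma -/
lemma cross (c : Coc (UnordConfigSpace ℂ k) A)
    (hs : ∀ w i j hij ρ h, c.φ (swapL w i j hij ρ h) = 0) {a b : ℝ}
    (fa fb : UnordConfigSpace ℂ k → A) (hfa : c.Pot (WW k a) fa) (hfb : c.Pot (WW k b) fb)
    (w : Fin k → ℂ) (i j : Fin k) (hij : i ≠ j) (α β : ℂ) (hα : uu b α = 0) (hβ : uu a β = 0)
    (hα0 : uu a α ≠ 0) (hβ0 : uu b β ≠ 0)
    (h1 : ∀ l, l ≠ i → l ≠ j → |uu a α| < |uu a (w l - w i)|)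
    (h2 : ∀ l, l ≠ i → l ≠ j → uu b (w l) ≠ uu b (w i) + uu b β ∧ uu b (w l) ≠ uu b (w i) - uu b β)
    (h3 : ∀ l m, l ≠ i → l ≠ j → m ≠ i → m ≠ j → uu a (w l) = uu a (w m) → l = m)
    (h4 : ∀ l m, l ≠ i → l ≠ j → m ≠ i → m ≠ j → uu b (w l) = uu b (w m) → l = m)
    (i1 : Function.Injective (Tt w i j (α + β))) (i2 : Function.Injective (Tt w i j (-α + β))) :
    fa (pr ⟨_, i1⟩) - fb (pr ⟨_, i1⟩) = fa (pr ⟨_, i2⟩) - fb (pr ⟨_, i2⟩) := by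
  have hd : β - α ≠ 0 := by
    intro h
    apply hβ0
    have := congrArg (uu b) h
    rw [map_sub, hα, map_zero] at this
    linarith
  let R : Set ℂ := {ρ | ρ / (β - α) ∈ Complex.slitPlane ∧ |uu a ρ| ≤ |uu a α|}
  have injR : ∀ ρ ∈ R, Function.Injective (Tt w i j ρ) := by
    intro ρ hρ
    have hρ0 : ρ ≠ 0 := by
      intro h
      have := hρ.1
      rw [h, zero_div] at this
      exact Complex.zero_notMem_slitPlane this
    refine inj3 _ i j ?_ ?_ ?_
    · rw [Tt_i, Tt_j w hij]
      intro h
      apply hρ0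
      have : 2 * ρ = 0 := by linear_combination h
      simpa using this
    · intro l l1 l2
      rw [Tt_i, Tt_j w hij, Tt_l w l1 l2]
      have := h1 l l1 l2
      constructor
      · intro h
        have e : w l - w i = ρ := by rw [h]; ring
        rw [e] at this; exact absurd hρ.2 (not_le.2 this)
      · intro h
        have e : w l - w i = -ρ := by rw [h]; ring
        rw [e, map_neg, abs_neg] at this; exact absurd hρ.2 (not_le.2 this)
    · intro l m l1 l2 m1 m2
      rw [Tt_l w l1 l2, Tt_l w m1 m2]
      intro h
      exact h3 l m l1 l2 m1 m2 (by rw [h])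
  have hstar : StarConvex ℝ (β - α) R := by
    intro y hy s t hs ht hst
    constructor
    · have := Complex.starConvex_one_slitPlane hy.1 hs ht hst
      convert this using 1
      simp only [Complex.real_smul]
      field_simp
    · rw [map_add, map_smul, map_smul, map_sub, hβ]
      have := hy.2
      calc |s • (0 - uu a α) + t • uu a y| ≤ |s • (0 - uu a α)| + |t • uu a y| := abs_add_le _ _
        _ = s * |uu a α| + t * |uu a y| := by
          rw [smul_eq_mul, smul_eq_mul, abs_mul, abs_mul, abs_of_nonneg hs, abs_of_nonneg ht, zero_sub,
            abs_neg]
        _ ≤ s * |uu a α| + t * |uu a α| := by gcongr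
        _ = |uu a α| := by rw [← add_mul, hst, one_mul]
  have hbase : β - α ∈ R := by
    refine ⟨by rw [div_self hd]; exact Complex.one_mem_slitPlane, ?_⟩
    rw [map_sub, hβ, zero_sub, abs_neg]
  let E : C(R, UnordConfigSpace ℂ k) := mkC (fun ρ => Tt w i j ρ)
    (continuous_Tt _ _ _ _ continuous_const continuous_subtype_val) (fun ρ => injR ρ ρ.2)
  obtain ⟨F, hF⟩ := Coc.pot_starConvex hbase hstar (c.comap E)
  have hF' : ∀ γ : C(I, R), c.φ (E.comp γ) = F (γ 1) - F (γ 0) := fun γ => hF γ fun _ => trivial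
  -- membership criterion
  have memR : ∀ ρ, |uu a ρ| ≤ |uu a α| → (∀ s : ℝ, 0 ≤ s → uu a ρ = s * uu a α → uu b ρ = - s * uu b β → False) →
      ρ ∈ R := by
    intro ρ hρ h
    refine ⟨?_, hρ⟩
    by_contra hn
    obtain ⟨s, hs0, e⟩ := slit_not hd hn
    refine h s hs0 ?_ ?_
    · rw [e, map_neg, map_smul, map_sub, hβ, smul_eq_mul]; ring
    · rw [e, map_neg, map_smul, map_sub, hα, smul_eq_mul]; ring
  have absle : ∀ s : ℝ, -1 ≤ s → s ≤ 1 → |s * uu a α| ≤ |uu a α| := by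
    intro s h1 h2
    rw [abs_mul]
    exact mul_le_of_le_one_left (abs_nonneg _) (abs_le.2 ⟨h1, h2⟩)
  have ua : ∀ x y : ℝ, uu a (x • α + y • β) = x * uu a α := by
    intro x y; rw [map_add, map_smul, map_smul, hβ, smul_zero, add_zero, smul_eq_mul]
  have ub : ∀ x y : ℝ, uu b (x • α + y • β) = y * uu b β := by
    intro x y; rw [map_add, map_smul, map_smul, hα, smul_zero, zero_add, smul_eq_mul]
  have memR' : ∀ x y : ℝ, -1 ≤ x → x ≤ 1 → (0 ≤ x → x ≠ - y) → x • α + y • β ∈ R := by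
    intro x y hx1 hx2 hxy
    refine memR _ (by rw [ua]; exact absle x hx1 hx2) ?_
    intro s hs0 e1 e2
    rw [ua] at e1
    rw [ub] at e2
    have e1 := mul_right_cancel₀ hα0 e1
    have e2 := mul_right_cancel₀ hβ0 e2
    apply hxy
    · rw [e1]; exact hs0
    · rw [e1, e2]; ring
  -- the two sides
  let γ : C(I, R) := ⟨fun t => ⟨(1 - 2 * (t:ℝ)) • α + (1:ℝ) • β, memR' _ _ (by linarith [t.2.2])
    (by linarith [t.2.1]) (by intro h h'; linarith)⟩, by fun_prop⟩
  let δ : C(I, R) := ⟨fun t => ⟨(-1:ℝ) • α + (1 - 2 * (t:ℝ)) • β, memR' _ _ (by linarith)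
    (by linarith) (by intro h h'; linarith)⟩, by fun_prop⟩
  have hγ := hfb (E.comp γ) (by
    intro t
    refine mem_WW.2 (Tt_uinj (uu b) w i j hij _ ?_ ?_ h4)
    · change uu b ((1 - 2 * (t:ℝ)) • α + (1:ℝ) • β) ≠ 0
      rw [ub, one_mul]; exact hβ0
    · change ∀ l, l ≠ i → l ≠ j → uu b (w l) ≠ uu b (w i) + uu b ((1 - 2 * (t:ℝ)) • α + (1:ℝ) • β) ∧
        uu b (w l) ≠ uu b (w i) - uu b ((1 - 2 * (t:ℝ)) • α + (1:ℝ) • β)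
      rw [ub, one_mul]; exact h2)
  have hδ := hfa (E.comp δ) (by
    intro t
    refine mem_WW.2 (Tt_uinj (uu a) w i j hij _ ?_ ?_ h3)
    · change uu a ((-1:ℝ) • α + (1 - 2 * (t:ℝ)) • β) ≠ 0
      rw [ua]; simpa using hα0
    · change ∀ l, l ≠ i → l ≠ j → uu a (w l) ≠ uu a (w i) + uu a ((-1:ℝ) • α + (1 - 2 * (t:ℝ)) • β) ∧
        uu a (w l) ≠ uu a (w i) - uu a ((-1:ℝ) • α + (1 - 2 * (t:ℝ)) • β)
      rw [ua]
      intro l l1 l2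
      have := h1 l l1 l2
      rw [map_sub] at this
      constructor
      · intro h
        have e : uu a (w l) - uu a (w i) = - uu a α := by rw [h]; ring
        rw [e, abs_neg] at this; exact lt_irrefl _ this
      · intro h
        have e : uu a (w l) - uu a (w i) = uu a α := by rw [h]; ring
        rw [e] at this; exact lt_irrefl _ this)
  -- small vector
  obtain ⟨ε, hε0, hε1, hε⟩ : ∃ ε : ℝ, 0 < ε ∧ ε ≤ 1 ∧ (1 + |a|) * ‖ε • (α + β)‖ ≤ |uu a α| := by
    have hp : 0 < (1 + |a|) * ‖α + β‖ + 1 := by positivity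
    have hq : 0 < |uu a α| := abs_pos.2 hα0
    refine ⟨min 1 (|uu a α| / ((1 + |a|) * ‖α + β‖ + 1)), lt_min one_pos (div_pos hq hp), min_le_left _ _, ?_⟩
    set m := min 1 (|uu a α| / ((1 + |a|) * ‖α + β‖ + 1)) with hm
    have hm0 : 0 < m := lt_min one_pos (div_pos hq hp)
    have : m ≤ |uu a α| / ((1 + |a|) * ‖α + β‖ + 1) := min_le_right _ _
    rw [le_div_iff₀ hp] at this
    rw [norm_smul, Real.norm_of_nonneg hm0.le]
    nlinarith
  set v := ε • (α + β) with hv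
  have hvn : v ≠ 0 := by
    intro h
    have := congrArg (uu b) h
    rw [hv, map_smul, map_add, hα, map_zero, zero_add, smul_eq_mul] at this
    rcases mul_eq_zero.1 this with h | h
    · exact hε0.ne' h
    · exact hβ0 h
  have aux : ∀ v' : ℂ, (v' / (β - α)).im < 0 → (v' = v ∨ v' = -v) → ∀ (m1 : v' ∈ R) (m2 : -v' ∈ R),
      F ⟨-v', m2⟩ = F ⟨v', m1⟩ := by
    intro v' hv' hvv m1 m2
    have hnorm : ‖v'‖ = ‖v‖ := by rcases hvv with h | h <;> simp [h]
    have hv'0 : v' ≠ 0 := by rw [← norm_pos_iff, hnorm, norm_pos_iff]; exact hvn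
    have hrot : ∀ t : I, v' * Complex.exp (((Real.pi * t : ℝ) : ℂ) * Complex.I) ∈ R := by
      intro t
      refine ⟨?_, ?_⟩
      · rw [mul_div_right_comm]; exact slit_rot hv' t
      · refine (uu_le a _).trans ?_
        rw [norm_mul, Complex.norm_exp_ofReal_mul_I, mul_one, hnorm]; exact hε
    let r : C(I, R) := ⟨fun t => ⟨_, hrot t⟩, by fun_prop⟩
    have hr := hF' r
    have hpos : 0 < 1 + |a| := by positivity
    have hlt : ∀ l, l ≠ i → l ≠ j → ‖v'‖ < ‖w l - w i‖ := by
      intro l l1 l2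
      rw [hnorm]
      have e1 := h1 l l1 l2
      have e2 := uu_le a (w l - w i)
      have : (1 + |a|) * ‖v‖ < (1 + |a|) * ‖w l - w i‖ := by linarith
      exact lt_of_mul_lt_mul_left this hpos.le
    have hwinj : Function.Injective (Function.update w j (w i + v')) := by
      refine inj3 _ i j ?_ ?_ ?_
      · rw [Function.update_self, Function.update_of_ne hij]
        intro h; apply hv'0; linear_combination -h
      · intro l l1 l2
        rw [Function.update_self, Function.update_of_ne hij, Function.update_of_ne l2]
        have := hlt l l1 l2
        constructor
        · intro h; rw [h] at this; simp at this
          exact absurd this (not_lt.2 (norm_nonneg _))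
        · intro h; rw [h] at this; simp at this
      · intro l m l1 l2 m1 m2
        rw [Function.update_of_ne l2, Function.update_of_ne m2]
        intro h
        exact h3 l m l1 l2 m1 m2 (by rw [h])
    have hok : Ok (Function.update w j (w i + v')) i j v' := by
      refine ⟨hv'0, fun l l1 l2 => ?_⟩
      rw [Function.update_of_ne hij, Function.update_of_ne l2]
      exact hlt l l1 l2
    have hsw := hs ⟨_, hwinj⟩ i j hij v' hok
    have e : swapL ⟨_, hwinj⟩ i j hij v' hok = E.comp r := by
      ext t
      apply congrArg pr
      apply Subtype.ext
      ext1 l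
      simp only [Tt]
      split_ifs with q1 q2
      · rw [Function.update_of_ne hij]; rfl
      · rw [Function.update_of_ne hij]; rfl
      · rw [Function.update_of_ne q2]
    rw [e, hr] at hsw
    have e1 : r 1 = ⟨-v', m2⟩ := by
      apply Subtype.ext
      simp [r, Complex.exp_pi_mul_I]
    have e0 : r 0 = ⟨v', m1⟩ := by
      apply Subtype.ext
      simp [r]
    rw [e0, e1] at hsw
    exact sub_eq_zero.1 hsw
  have hvR : v ∈ R := by
    rw [hv, smul_add]
    exact memR' _ _ (by linarith) hε1 (by intro h h'; linarith)
  have hvR' : -v ∈ R := by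
    rw [hv, smul_add, neg_add, ← neg_smul, ← neg_smul]
    exact memR' _ _ (by linarith) (by linarith) (by intro h h'; linarith)
  have him : (v / (β - α)).im ≠ 0 := by
    intro h
    have e : v / (β - α) = ((v / (β - α)).re : ℂ) := Complex.ext (by simp) (by simp [h])
    set r := (v / (β - α)).re
    have e' : v = r • (β - α) := by rw [Complex.real_smul, ← e, div_mul_cancel₀ _ hd]
    have e1 := congrArg (uu a) e'
    have e2 := congrArg (uu b) e'
    rw [hv, map_smul, map_smul, map_add, map_sub, hβ, smul_eq_mul, smul_eq_mul] at e1
    rw [hv, map_smul, map_smul, map_add, map_sub, hα, smul_eq_mul, smul_eq_mul] at e2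
    have e1 : ε = - r := mul_right_cancel₀ hα0 (by linear_combination e1)
    have e2 : ε = r := mul_right_cancel₀ hβ0 (by linear_combination e2)
    linarith
  have hFv : F ⟨-v, hvR'⟩ = F ⟨v, hvR⟩ := by
    rcases lt_or_gt_of_ne him with h | h
    · exact aux v h (Or.inl rfl) _ _
    · have := aux (-v) (by rw [neg_div, Complex.neg_im]; linarith) (Or.inr rfl) hvR' (by rwa [neg_neg])
      rw [← this]
      congr 1
      apply Subtype.ext
      simp
  -- scaling
  have hxb : ∀ t : I, ε ≤ ε + t * (1 - ε) ∧ ε + t * (1 - ε) ≤ 1 := by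
    intro t
    have := t.2.1
    have := t.2.2
    constructor <;> nlinarith
  let s1 : C(I, R) := ⟨fun t => ⟨(ε + t * (1 - ε)) • α + (ε + t * (1 - ε)) • β, memR' _ _
    (by linarith [hxb t]) (hxb t).2 (by intro h h'; linarith [(hxb t).1])⟩, by fun_prop⟩
  let s2 : C(I, R) := ⟨fun t => ⟨(-(ε + t * (1 - ε))) • α + (-(ε + t * (1 - ε))) • β, memR' _ _
    (by linarith [hxb t]) (by linarith [(hxb t).1]) (by intro h h'; linarith [(hxb t).1])⟩, by fun_prop⟩
  have hss : E.comp s1 = E.comp s2 := by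
    ext t
    apply pr_eq.2
    refine ⟨Equiv.swap i j, ?_⟩
    change Tt w i j _ ∘ _ = Tt w i j _
    rw [Tt_neg w hij]
    congr 1
    simp [s1, s2]
    ring
  have hs1 := hF' s1
  have hs2 := hF' s2
  rw [hss, hs2] at hs1
  have a1 : s1 0 = ⟨v, hvR⟩ := by apply Subtype.ext; simp [s1, hv]
  have a2 : s2 0 = ⟨-v, hvR'⟩ := by apply Subtype.ext; simp [s2, hv]; ring
  have a3 : s1 1 = γ 0 := by apply Subtype.ext; simp [s1, γ]
  have a4 : s2 1 = δ 1 := by apply Subtype.ext; simp [s2, δ]; ring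
  have a5 : γ 1 = δ 0 := by apply Subtype.ext; simp [γ, δ]; ring
  rw [a1, a2, a3, a4, hFv] at hs1
  rw [hF'] at hγ hδ
  have b1 : E.comp γ 0 = pr ⟨_, i1⟩ := by
    apply congrArg pr
    apply Subtype.ext
    change Tt w i j _ = Tt w i j _
    congr 1
    simp [γ]
  have b2 : E.comp γ 1 = pr ⟨_, i2⟩ := by
    apply congrArg pr
    apply Subtype.ext
    change Tt w i j _ = Tt w i j _
    congr 1
    simp [γ]; ring
  have b3 : E.comp δ 0 = pr ⟨_, i2⟩ := by
    rw [← b2]; exact congrArg E a5.symm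
  have b4 : E.comp δ 1 = pr ⟨_, i1⟩ := by
    rw [← b1]
    symm
    apply pr_eq.2
    refine ⟨Equiv.swap i j, ?_⟩
    change Tt w i j _ ∘ _ = Tt w i j _
    rw [Tt_neg w hij]
    congr 1
    simp [γ, δ]
    ring
  rw [b1, b2] at hγ
  rw [b3, b4] at hδ
  rw [a5] at hγ
  have h5 : F (δ 1) = F (γ 0) := sub_left_injective hs1
  rw [h5] at hδ
  have h6 : (fb (pr ⟨_, i2⟩) - fb (pr ⟨_, i1⟩)) + (fa (pr ⟨_, i1⟩) - fa (pr ⟨_, i2⟩)) = 0 := by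
    rw [← hγ, ← hδ]; abel
  rw [← sub_eq_zero, ← h6]
  abel

end crossing
end CfgH


open CategoryTheory
open unitInterval Topology

namespace CfgH
section thmP
variable {k : ℕ} {A : Type} [AddCommGroup A]

/-- coordinates dual to two functionals -/
noncomputable def zt (a b s t : ℝ) : ℂ := ⟨s - a * ((s - t) / (a - b)), (s - t) / (a - b)⟩

lemma uu_zt_a (a b s t : ℝ) : uu a (zt a b s t) = s := by
  rw [uu_apply, zt]; ring

lemma uu_zt_b {a b : ℝ} (hab : a ≠ b) (s t : ℝ) : uu b (zt a b s t) = t := by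
  have : a - b ≠ 0 := sub_ne_zero.2 hab
  rw [uu_apply, zt]
  field_simp
  ring

lemma g_path (c : Coc (UnordConfigSpace ℂ k) A) {a b : ℝ}
    (fa fb : UnordConfigSpace ℂ k → A) (hfa : c.Pot (WW k a) fa) (hfb : c.Pot (WW k b) fb)
    (z z' : Fk ℂ k) (h1 : ∀ i j, i ≠ j → uu a (z.1 i) ≠ uu a (z.1 j))
    (h2 : ∀ i j, i ≠ j → uu b (z.1 i) ≠ uu b (z.1 j))
    (h3 : ∀ i j, uu a (z.1 i) < uu a (z.1 j) → uu a (z'.1 i) < uu a (z'.1 j))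
    (h4 : ∀ i j, uu b (z.1 i) < uu b (z.1 j) → uu b (z'.1 i) < uu b (z'.1 j)) :
    fa (pr z) - fb (pr z) = fa (pr z') - fb (pr z') := by
  let ln : I → Fin k → ℂ := fun t i => z.1 i + (t:ℝ) • (z'.1 i - z.1 i)
  have key : ∀ (u : ℂ →ₗ[ℝ] ℝ), (∀ i j, i ≠ j → u (z.1 i) ≠ u (z.1 j)) →
      (∀ i j, u (z.1 i) < u (z.1 j) → u (z'.1 i) < u (z'.1 j)) →
      ∀ t, Function.Injective fun i => u (ln t i) := by
    intro u h1 h3 t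
    have lt : ∀ i j, u (z.1 i) < u (z.1 j) → u (ln t i) < u (ln t j) := by
      intro i j h
      have h' := h3 i j h
      simp only [ln, map_add, map_smul, map_sub, smul_eq_mul]
      have t0 := t.2.1
      have t1 := t.2.2
      rcases eq_or_lt_of_le t0 with t2 | t2
      · rw [← t2]; simpa using h
      · have q1 := mul_lt_mul_of_pos_left h' t2
        have q2 := mul_le_mul_of_nonneg_left h.le (sub_nonneg.2 t1)
        linarith
    intro i j hij
    by_contra hne
    rcases lt_or_gt_of_ne (h1 i j hne) with h | h
    · exact absurd hij (lt i j h).ne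
    · exact absurd hij (lt j i h).ne'
  have hinj : ∀ t, Function.Injective (ln t) := by
    intro t i j hij
    apply key (uu a) h1 h3 t
    simp only [hij]
  have hc : Continuous ln := by
    refine continuous_pi fun i => ?_
    simp only [ln]
    fun_prop
  let γ : C(I, UnordConfigSpace ℂ k) := mkC ln hc hinj
  have e1 := hfa γ (fun t => mem_WW.2 (key (uu a) h1 h3 t))
  have e2 := hfb γ (fun t => mem_WW.2 (key (uu b) h2 h4 t))
  have b0 : γ 0 = pr z := by
    apply congrArg pr
    apply Subtype.ext
    ext1 i
    simp [ln]
  have b1 : γ 1 = pr z' := by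
    apply congrArg pr
    apply Subtype.ext
    ext1 i
    simp [ln]
  rw [b0, b1] at e1 e2
  rw [e1] at e2
  rw [sub_eq_sub_iff_add_eq_add] at e2 ⊢
  rw [add_comm, e2.symm, add_comm]

/-- standard tuple attached to a permutation -/
noncomputable def zP (a b : ℝ) (p : Equiv.Perm (Fin k)) : Fin k → ℂ :=
  fun i => zt a b ((p i : ℕ) : ℝ) ((i : ℕ) : ℝ)

lemma zP_inj {a b : ℝ} (hab : a ≠ b) (p : Equiv.Perm (Fin k)) : Function.Injective (zP a b p) := by
  intro i j h
  have := congrArg (uu b) h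
  rw [zP, zP, uu_zt_b hab, uu_zt_b hab] at this
  exact Fin.ext (by exact_mod_cast this)

lemma zP_step (n : ℕ) (c : Coc (UnordConfigSpace ℂ (n+1)) A)
    (hs : ∀ w i j hij ρ h, c.φ (swapL w i j hij ρ h) = 0) {a b : ℝ} (hab : a ≠ b)
    (fa fb : UnordConfigSpace ℂ (n+1) → A) (hfa : c.Pot (WW (n+1) a) fa)
    (hfb : c.Pot (WW (n+1) b) fb) (p : Equiv.Perm (Fin (n+1))) (m : Fin n) :
    fa (pr ⟨_, zP_inj hab p⟩) - fb (pr ⟨_, zP_inj hab p⟩) =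
    fa (pr ⟨_, zP_inj hab (Equiv.swap m.castSucc m.succ * p)⟩) -
      fb (pr ⟨_, zP_inj hab (Equiv.swap m.castSucc m.succ * p)⟩) := by
  obtain ⟨i, hi⟩ := p.surjective m.succ
  obtain ⟨j, hj⟩ := p.surjective m.castSucc
  have hij : i ≠ j := by
    rintro rfl
    rw [hi] at hj
    exact absurd hj (Fin.castSucc_lt_succ).ne'
  let w : Fin (n+1) → ℂ := Function.update (zP a b p) i
    (zt a b ((m : ℕ) + 1/2) ((((i : ℕ) : ℝ) + ((j : ℕ) : ℝ)) / 2))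
  have wi : w i = zt a b ((m : ℕ) + 1/2) ((((i : ℕ) : ℝ) + ((j : ℕ) : ℝ)) / 2) :=
    Function.update_self _ _ _
  have wl : ∀ l, l ≠ i → w l = zt a b ((p l : ℕ) : ℝ) ((l : ℕ) : ℝ) :=
    fun l h => Function.update_of_ne h _ _
  set α := zt a b (1/2) 0 with hα
  set β := zt a b 0 ((((i : ℕ) : ℝ) - ((j : ℕ) : ℝ)) / 2) with hβ
  have hijr : ((i : ℕ) : ℝ) ≠ ((j : ℕ) : ℝ) := fun h => hij (Fin.ext (by exact_mod_cast h))
  have hiv : ((p i : ℕ) : ℝ) = (m : ℕ) + 1 := by rw [hi]; simp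
  have hjv : ((p j : ℕ) : ℝ) = (m : ℕ) := by rw [hj]; simp
  have e1 : Tt w i j (α + β) = zP a b p := by
    ext1 l
    by_cases l1 : l = i
    · subst l1
      rw [Tt_i, wi, zP]
      refine uu_ext hab ?_ ?_
      · simp only [map_add, hα, hβ, uu_zt_a, hiv]; ring
      · simp only [map_add, hα, hβ, uu_zt_b hab]; ring
    by_cases l2 : l = j
    · subst l2
      rw [Tt_j w hij, wi, zP]
      refine uu_ext hab ?_ ?_
      · simp only [map_add, map_sub, hα, hβ, uu_zt_a, hjv]; ring
      · simp only [map_add, map_sub, hα, hβ, uu_zt_b hab]; ring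
    rw [Tt_l w l1 l2, wl l l1]; rfl
  have e2 : Tt w i j (-α + β) = zP a b (Equiv.swap m.castSucc m.succ * p) := by
    ext1 l
    by_cases l1 : l = i
    · subst l1
      rw [Tt_i, wi, zP, Equiv.Perm.mul_apply, hi, Equiv.swap_apply_right]
      refine uu_ext hab ?_ ?_
      · simp only [map_add, map_neg, hα, hβ, uu_zt_a, Fin.val_castSucc]; ring
      · simp only [map_add, map_neg, hα, hβ, uu_zt_b hab]; ring
    by_cases l2 : l = j
    · subst l2
      rw [Tt_j w hij, wi, zP, Equiv.Perm.mul_apply, hj, Equiv.swap_apply_left]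
      refine uu_ext hab ?_ ?_
      · simp only [map_add, map_sub, map_neg, hα, hβ, uu_zt_a, Fin.val_succ]; push_cast; ring
      · simp only [map_add, map_sub, map_neg, hα, hβ, uu_zt_b hab]; ring
    rw [Tt_l w l1 l2, wl l l1, zP, Equiv.Perm.mul_apply, Equiv.swap_apply_of_ne_of_ne]
    · rw [← hj]; exact fun h => l2 (p.injective h)
    · rw [← hi]; exact fun h => l1 (p.injective h)
  have i1 : Function.Injective (Tt w i j (α + β)) := by rw [e1]; exact zP_inj hab p
  have i2 : Function.Injective (Tt w i j (-α + β)) := by rw [e2]; exact zP_inj hab _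
  have := cross c hs fa fb hfa hfb w i j hij α β (by rw [hα, uu_zt_b hab]) (by rw [hβ, uu_zt_a])
    (by rw [hα, uu_zt_a]; norm_num)
    (by rw [hβ, uu_zt_b hab]; intro h; apply hijr; linarith) ?_ ?_ ?_ ?_ i1 i2
  · have q1 : (⟨_, i1⟩ : Fk ℂ (n+1)) = ⟨_, zP_inj hab p⟩ := Subtype.ext e1
    have q2 : (⟨_, i2⟩ : Fk ℂ (n+1)) = ⟨_, zP_inj hab (Equiv.swap m.castSucc m.succ * p)⟩ :=
      Subtype.ext e2
    rw [q1, q2] at this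
    exact this
  · intro l l1 l2
    rw [map_sub, wl l l1, wi, hα, uu_zt_a, uu_zt_a, uu_zt_a]
    have hl1 : (p l : ℕ) ≠ m + 1 := by
      intro h; apply l1; apply p.injective; rw [hi]; exact Fin.ext (by simp [h])
    have hl2 : (p l : ℕ) ≠ m := by
      intro h; apply l2; apply p.injective; rw [hj]; exact Fin.ext (by simp [h])
    rw [abs_of_pos (by norm_num : (0:ℝ) < 1/2), lt_abs]
    rcases lt_or_ge (p l : ℕ) (m : ℕ) with h | h
    · right
      have : ((p l : ℕ) : ℝ) + 1 ≤ ((m : ℕ) : ℝ) := by exact_mod_cast h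
      linarith
    · left
      have : ((m : ℕ) : ℝ) + 2 ≤ ((p l : ℕ) : ℝ) := by
        have : (m : ℕ) + 2 ≤ (p l : ℕ) := by omega
        exact_mod_cast this
      linarith
  · intro l l1 l2
    rw [wl l l1, wi, hβ, uu_zt_b hab, uu_zt_b hab, uu_zt_b hab]
    constructor
    · intro h
      apply l1
      apply Fin.ext
      have : ((l : ℕ) : ℝ) = ((i : ℕ) : ℝ) := by rw [h]; ring
      exact_mod_cast this
    · intro h
      apply l2
      apply Fin.ext
      have : ((l : ℕ) : ℝ) = ((j : ℕ) : ℝ) := by rw [h]; ring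
      exact_mod_cast this
  · intro l l' l1 l2 m1 m2
    rw [wl l l1, wl l' m1, uu_zt_a, uu_zt_a]
    intro h
    apply p.injective
    exact Fin.ext (by exact_mod_cast h)
  · intro l l' l1 l2 m1 m2
    rw [wl l l1, wl l' m1, uu_zt_b hab, uu_zt_b hab]
    intro h
    exact Fin.ext (by exact_mod_cast h)

lemma zP_const (c : Coc (UnordConfigSpace ℂ k) A)
    (hs : ∀ w i j hij ρ h, c.φ (swapL w i j hij ρ h) = 0) {a b : ℝ} (hab : a ≠ b)
    (fa fb : UnordConfigSpace ℂ k → A) (hfa : c.Pot (WW k a) fa)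
    (hfb : c.Pot (WW k b) fb) (p : Equiv.Perm (Fin k)) :
    fa (pr ⟨_, zP_inj hab p⟩) - fb (pr ⟨_, zP_inj hab p⟩) =
    fa (pr ⟨_, zP_inj hab (1 : Equiv.Perm (Fin k))⟩) - fb (pr ⟨_, zP_inj hab (1 : Equiv.Perm (Fin k))⟩) := by
  cases k with
  | zero => rw [Subsingleton.elim p 1]
  | succ n =>
    have hp : p ∈ Submonoid.closure (Set.range fun i : Fin n ↦ Equiv.swap i.castSucc i.succ) := by
      rw [Equiv.Perm.mclosure_swap_castSucc_succ]; trivial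
    induction hp using Submonoid.closure_induction_left with
    | one => rfl
    | mul_left x hx y hy ih =>
      obtain ⟨m, rfl⟩ := hx
      rw [← ih]
      exact (zP_step n c hs hab fa fb hfa hfb y m).symm

lemma g_std (c : Coc (UnordConfigSpace ℂ k) A) {a b : ℝ} (hab : a ≠ b)
    (fa fb : UnordConfigSpace ℂ k → A) (hfa : c.Pot (WW k a) fa)
    (hfb : c.Pot (WW k b) fb) (y : UnordConfigSpace ℂ k) (ya : y ∈ WW k a) (yb : y ∈ WW k b) :
    ∃ p : Equiv.Perm (Fin k), fa y - fb y =
      fa (pr ⟨_, zP_inj hab p⟩) - fb (pr ⟨_, zP_inj hab p⟩) := by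
  obtain ⟨z, rfl⟩ := yb
  have hz : StrictMono fun i => uu b (z.1 i) := z.2
  have ya' : Function.Injective fun i => uu a (z.1 i) := mem_WW.1 ya
  let q := Tuple.sort fun i => uu a (z.1 i)
  have hm : StrictMono ((fun i => uu a (z.1 i)) ∘ q) :=
      (Tuple.monotone_sort _).strictMono_of_injective (ya'.comp q.injective)
  refine ⟨q⁻¹, ?_⟩
  refine g_path c fa fb hfa hfb ⟨z.1, Srt_inj z.2⟩ ⟨_, zP_inj hab q⁻¹⟩ (fun i j h e => h (ya' e))
    (fun i j h e => h (hz.injective e)) ?_ ?_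
  · intro i j h
    simp only [zP]
    rw [uu_zt_a, uu_zt_a]
    have : ((fun i => uu a (z.1 i)) ∘ q) (q⁻¹ i) < ((fun i => uu a (z.1 i)) ∘ q) (q⁻¹ j) := by
      simpa using h
    rw [hm.lt_iff_lt] at this
    exact_mod_cast this
  · intro i j h
    simp only [zP]
    rw [uu_zt_b hab, uu_zt_b hab]
    have := hz.lt_iff_lt.1 h
    exact_mod_cast this

theorem theoremP (c : Coc (UnordConfigSpace ℂ k) A)
    (hs : ∀ w i j hij ρ h, c.φ (swapL w i j hij ρ h) = 0) : ∃ f, c.Pot Set.univ f := by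
  choose f hf using fun a => WW_pot (k := k) a c
  refine c.glue (fun a => WW k a) f 0 (fun a => (eS_open a).isOpen_range) ?_ hf ?_ ?_
  · intro x
    obtain ⟨z, rfl⟩ := pr_surj x
    have hfin : (⋃ i, ⋃ j, {a : ℝ | i ≠ j ∧ uu a (z.1 i) = uu a (z.1 j)}).Finite := by
      refine Set.finite_iUnion fun i => Set.finite_iUnion fun j => ?_
      refine Set.Subsingleton.finite ?_
      rintro a ⟨h, ha⟩ b ⟨_, hb⟩
      by_contra hab
      exact h (z.2 (uu_ext hab ha hb))
    obtain ⟨a, ha⟩ := (Set.infinite_univ (α := ℝ)).exists_notMem_finite hfin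
    refine ⟨a, mem_WW.2 fun i j hij => ?_⟩
    by_contra hne
    exact ha.2 (Set.mem_iUnion.2 ⟨i, Set.mem_iUnion.2 ⟨j, hne, hij⟩⟩)
  · intro a b x y xa xb ya yb
    by_cases hab : a = b
    · subst hab; simp
    obtain ⟨p, hp⟩ := g_std c hab _ _ (hf a) (hf b) x xa xb
    obtain ⟨q, hq⟩ := g_std c hab _ _ (hf a) (hf b) y ya yb
    rw [hp, hq, zP_const c hs hab _ _ (hf a) (hf b) p, zP_const c hs hab _ _ (hf a) (hf b) q]
  · intro a b d
    have : ∀ a, pr ⟨_, Srt_inj (std_mem (k := k) 0)⟩ ∈ WW k a := fun a => ⟨⟨_, std_mem a⟩, rfl⟩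
    exact ⟨_, this a, this b, this d⟩

end thmP
end CfgH


open CategoryTheory
open unitInterval Topology

namespace CfgH
section disc

/-- generalized discriminant -/
noncomputable def Dg {k : ℕ} (d : Fin k → Fin k → ℂ) : ℂ := ∏ x, ∏ y, if x = y then 1 else d x y

lemma Dg_perm {k : ℕ} (d : Fin k → Fin k → ℂ) (p : Equiv.Perm (Fin k)) :
    Dg (fun x y => d (p x) (p y)) = Dg d := by
  unfold Dg
  refine Fintype.prod_equiv p _ _ fun x => Fintype.prod_equiv p _ _ fun y => ?_
  simp only [p.injective.eq_iff]

lemma Dg_ne {k : ℕ} (d : Fin k → Fin k → ℂ) (h : ∀ x y, x ≠ y → d x y ≠ 0) : Dg d ≠ 0 := by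
  unfold Dg
  refine Finset.prod_ne_zero_iff.2 fun x _ => Finset.prod_ne_zero_iff.2 fun y _ => ?_
  split_ifs with e
  · exact one_ne_zero
  · exact h x y e

lemma continuous_Dg {T : Type} [TopologicalSpace T] {k : ℕ} (d : T → Fin k → Fin k → ℂ)
    (h : ∀ x y, Continuous fun t => d t x y) : Continuous fun t => Dg (d t) := by
  unfold Dg
  refine continuous_finsetProd _ fun x _ => continuous_finsetProd _ fun y _ => ?_
  split_ifs
  · exact continuous_const
  · exact h x y

lemma Dg_succ {k : ℕ} (d : Fin (k+1) → Fin (k+1) → ℂ) :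
    Dg d = (∏ l : Fin k, d 0 l.succ) * (∏ l : Fin k, d l.succ 0) *
      Dg (fun x y => d x.succ y.succ) := by
  unfold Dg
  simp only [Fin.prod_univ_succ, Fin.succ_inj, if_true, one_mul, (Fin.succ_ne_zero _).symm,
    Fin.succ_ne_zero, if_false, Finset.prod_mul_distrib]
  ring

/-- discriminant of a tuple -/
noncomputable def Dz {k : ℕ} (z : Fin k → ℂ) : ℂ := Dg fun x y => z x - z y

lemma Dz_ne {k : ℕ} (z : Fin k → ℂ) (h : Function.Injective z) : Dz z ≠ 0 :=
  Dg_ne _ fun _ _ hxy => sub_ne_zero.2 fun e => hxy (h e)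

lemma continuous_Dz {k : ℕ} : Continuous (Dz : (Fin k → ℂ) → ℂ) :=
  continuous_Dg _ fun x y => (continuous_apply x).sub (continuous_apply y)

/-- discriminant map -/
noncomputable def disc (k : ℕ) : C(UnordConfigSpace ℂ k, {z : ℂ // z ≠ 0}) :=
  ⟨Quotient.lift (fun f : Fk ℂ k => (⟨Dz f.1, Dz_ne _ f.2⟩ : {z : ℂ // z ≠ 0})) (by
    rintro f g ⟨p, hp⟩
    apply Subtype.ext
    change Dz f.1 = Dz g.1
    rw [← hp]
    exact (Dg_perm (fun x y => f.1 x - f.1 y) p).symm),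
    Continuous.quotient_lift ((continuous_Dz.comp continuous_subtype_val).subtype_mk _) _⟩

lemma disc_pr {k : ℕ} (f : Fk ℂ k) : (disc k (pr f) : ℂ) = Dz f.1 := rfl

lemma lift_prod {m : ℕ} (κ : ℂ) (hκ : κ ≠ 0) (N : ℤ) (u : Fin m → C(I, ℂ))
    (hu : ∀ l t, ‖u l t‖ < 1) (hp : ∀ l, u l 0 = u l 1) : ∃ ℓ : C(I, ℂ),
    (∀ t : I, κ * Complex.exp ((N : ℂ) * (2 * Real.pi * Complex.I) * ((t : ℝ) : ℂ)) * ∏ l, (1 - u l t) ^ 2 =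
      Complex.exp (ℓ t)) ∧ ℓ 1 = ℓ 0 + N * (2 * Real.pi * Complex.I) := by
  have hsl : ∀ l t, 1 - u l t ∈ Complex.slitPlane := by
    intro l t
    rw [sub_eq_add_neg]
    exact Complex.mem_slitPlane_of_norm_lt_one (by rw [norm_neg]; exact hu l t)
  refine ⟨⟨fun t => Complex.log κ + (N : ℂ) * (2 * Real.pi * Complex.I) * ((t : ℝ) : ℂ) +
    ∑ l, 2 * Complex.log (1 - u l t), ?_⟩, ?_, ?_⟩
  · refine Continuous.add (by fun_prop) (continuous_finsetSum _ fun l _ => ?_)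
    refine continuous_const.mul ?_
    exact Continuous.clog (by fun_prop) (hsl l)
  · intro t
    simp only [ContinuousMap.coe_mk]
    rw [Complex.exp_add, Complex.exp_add, Complex.exp_log hκ, Complex.exp_sum]
    congr 1
    refine Finset.prod_congr rfl fun l _ => ?_
    rw [two_mul, Complex.exp_add, Complex.exp_log (Complex.slitPlane_ne_zero (hsl l t)), sq]
  · simp only [ContinuousMap.coe_mk, hp]
    simp
    ring

/-- The base swap: ordered lift -/
noncomputable def bz (m : ℕ) (t : I) : Fin (m+2) → ℂ :=
  Tt (fun l : Fin (m+2) => ((l : ℕ) : ℂ)) 0 1 (1 * Complex.exp (((Real.pi * t : ℝ) : ℂ) * Complex.I))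

/-- base configuration -/
noncomputable def bw (m : ℕ) : Fk ℂ (m+2) := ⟨fun l => ((l : ℕ) : ℂ), fun i j h => Fin.ext (by
  simpa using h)⟩

lemma bok (m : ℕ) : Ok (bw m).1 0 1 1 := by
  refine ⟨one_ne_zero, fun l h1 h2 => ?_⟩
  simp [bw]
  have h1' : (l : ℕ) ≠ 0 := fun h => h1 (Fin.ext h)
  have h2' : (l : ℕ) ≠ 1 := fun h => h2 (Fin.ext h)
  omega

lemma h01 (m : ℕ) : (0 : Fin (m+2)) ≠ 1 := by simp

/-- base swap loop -/
noncomputable def bsw (m : ℕ) : C(I, UnordConfigSpace ℂ (m+2)) := swapL (bw m) 0 1 (h01 m) 1 (bok m)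

lemma bz_inj (m : ℕ) (t : I) : Function.Injective (bz m t) := ((bok m).rot _).inj (h01 m)

lemma bsw_apply (m : ℕ) (t : I) : bsw m t = pr ⟨bz m t, bz_inj m t⟩ := rfl

lemma continuous_bz (m : ℕ) : Continuous (bz m) :=
  continuous_Tt _ _ _ _ continuous_const (by fun_prop)

lemma bz_lift (m : ℕ) : ∃ ℓ : C(I, ℂ), (∀ t, Dz (bz m t) = Complex.exp (ℓ t)) ∧
    ℓ 1 = ℓ 0 + (2 * Real.pi * Complex.I) := by
  let q : Fin m → ℂ := fun l => ((l : ℕ) : ℂ) + 2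
  have hqn : ∀ l, 2 ≤ ‖q l‖ := by
    intro l
    have : q l = (((l : ℕ) + 2 : ℕ) : ℂ) := by simp [q]
    rw [this, Complex.norm_natCast]
    push_cast
    have : (0:ℝ) ≤ ((l : ℕ) : ℝ) := by positivity
    linarith
  have hq0 : ∀ l, q l ≠ 0 := by
    intro l h
    have := hqn l
    rw [h, norm_zero] at this
    linarith
  let κ : ℂ := (-4) * (∏ l, q l ^ 4) * Dg (fun x y : Fin m => q x - q y)
  have hκ : κ ≠ 0 := by
    refine mul_ne_zero (mul_ne_zero (by norm_num)
      (Finset.prod_ne_zero_iff.2 fun l _ => pow_ne_zero _ (hq0 l))) ?_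
    refine Dg_ne _ fun x y hxy => sub_ne_zero.2 fun e => hxy ?_
    apply Fin.ext
    simpa [q] using e
  let u : Fin m → C(I, ℂ) := fun l =>
    ⟨fun t => Complex.exp (2 * Real.pi * Complex.I * ((t : ℝ) : ℂ)) / q l ^ 2, by fun_prop⟩
  have hun : ∀ l t, ‖u l t‖ < 1 := by
    intro l t
    change ‖Complex.exp (2 * Real.pi * Complex.I * ((t : ℝ) : ℂ)) / q l ^ 2‖ < 1
    have e : 2 * Real.pi * Complex.I * ((t : ℝ) : ℂ) = ((2 * Real.pi * t : ℝ) : ℂ) * Complex.I := by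
      push_cast; ring
    rw [norm_div, e, Complex.norm_exp_ofReal_mul_I, norm_pow, div_lt_one (by have := hqn l; positivity)]
    nlinarith [hqn l]
  obtain ⟨ℓ, h1, h2⟩ := lift_prod κ hκ 1 u hun (by
    intro l
    simp [u, Complex.exp_two_pi_mul_I])
  refine ⟨ℓ, fun t => ?_, by simpa using h2⟩
  rw [← h1]
  set E := Complex.exp (((Real.pi * t : ℝ) : ℂ) * Complex.I) with hE
  have hE2 : Complex.exp (2 * Real.pi * Complex.I * ((t : ℝ) : ℂ)) = E ^ 2 := by
    rw [hE, ← Complex.exp_nat_mul]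
    congr 1
    push_cast; ring
  have z0 : bz m t 0 = E := by rw [bz, Tt_i]; simp [hE]
  have z1 : bz m t (Fin.succ 0) = -E := by
    change bz m t 1 = -E
    rw [bz, Tt_j _ (h01 m)]; simp [hE]
  have zl : ∀ l : Fin m, bz m t l.succ.succ = q l := by
    intro l
    rw [bz, Tt_l]
    · simp [q]; ring
    · exact Fin.succ_ne_zero _
    · intro h
      have := congrArg Fin.val h
      simp at this
  have hu' : ∀ l, u l t = E ^ 2 / q l ^ 2 := by
    intro l; rw [← hE2]; rfl
  rw [Dz, Dg_succ, Dg_succ]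
  simp only [Fin.prod_univ_succ, z0, z1, zl, hu', Int.cast_one, one_mul, hE2, κ]
  have : ∀ l, (1 - E ^ 2 / q l ^ 2) ^ 2 * q l ^ 4 = (E - q l) * (q l - E) * ((-E - q l) * (q l - -E)) := by
    intro l
    have := hq0 l
    field_simp
    ring
  have key : (∏ l, (1 - E ^ 2 / q l ^ 2) ^ 2) * (∏ l, q l ^ 4) =
      (∏ l, (E - q l)) * (∏ l, (q l - E)) * ((∏ l, (-E - q l)) * (∏ l, (q l - -E))) := by
    rw [← Finset.prod_mul_distrib, ← Finset.prod_mul_distrib, ← Finset.prod_mul_distrib,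
      ← Finset.prod_mul_distrib]
    exact Finset.prod_congr rfl fun l _ => this l
  linear_combination (4 * E ^ 2 * Dg (fun x y : Fin m => q x - q y)) * key

/-- big circle -/
noncomputable def Bz (m : ℕ) (t : I) : Fin (m+2) → ℂ :=
  Fin.cons ((m + 2 : ℕ) * Complex.exp (2 * Real.pi * Complex.I * ((t : ℝ) : ℂ)))
    (fun l : Fin (m+1) => ((l : ℕ) : ℂ) + 1)

lemma Bz_norm0 (m : ℕ) (t : I) : ‖Bz m t 0‖ = m + 2 := by
  have e : 2 * Real.pi * Complex.I * ((t : ℝ) : ℂ) = ((2 * Real.pi * t : ℝ) : ℂ) * Complex.I := by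
      push_cast; ring
  simp only [Bz, Fin.cons_zero]
  rw [norm_mul, e, Complex.norm_exp_ofReal_mul_I, Complex.norm_natCast]
  simp

lemma Bz_norm (m : ℕ) (t : I) (l : Fin (m+1)) : ‖Bz m t l.succ‖ = ((l : ℕ) : ℝ) + 1 := by
  simp only [Bz, Fin.cons_succ]
  have : ((l : ℕ) : ℂ) + 1 = (((l : ℕ) + 1 : ℕ) : ℂ) := by simp
  rw [this, Complex.norm_natCast]
  simp

lemma Bz_inj (m : ℕ) (t : I) : Function.Injective (Bz m t) := by
  have key : ∀ l : Fin (m+1), Bz m t 0 ≠ Bz m t l.succ := by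
    intro l h
    have := congrArg norm h
    rw [Bz_norm0, Bz_norm] at this
    have h2 : m + 1 = (l : ℕ) := by
      have : ((m + 1 : ℕ) : ℝ) = ((l : ℕ) : ℝ) := by push_cast; linarith
      exact_mod_cast this
    omega
  intro x y
  refine Fin.cases ?_ (fun x => ?_) x <;> refine Fin.cases ?_ (fun y => ?_) y
  · simp
  · intro h; exact absurd h (key y)
  · intro h; exact absurd h.symm (key x)
  · intro h
    simp only [Bz, Fin.cons_succ] at h
    have : x = y := Fin.ext (by simpa using h)
    rw [this]

lemma continuous_Bz (m : ℕ) : Continuous (Bz m) := by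
  refine continuous_pi fun x => ?_
  refine Fin.cases ?_ (fun x => ?_) x
  · simp only [Bz, Fin.cons_zero]; fun_prop
  · simp only [Bz, Fin.cons_succ]; exact continuous_const

lemma Bz_lift (m : ℕ) : ∃ ℓ : C(I, ℂ), (∀ t, Dz (Bz m t) = Complex.exp (ℓ t)) ∧
    ℓ 1 = ℓ 0 + ((2 * m + 2 : ℕ) : ℤ) * (2 * Real.pi * Complex.I) := by
  let q : Fin (m+1) → ℂ := fun l => ((l : ℕ) : ℂ) + 1
  let R : ℂ := (m + 2 : ℕ)
  have hR : R ≠ 0 := by simp only [R]; exact_mod_cast (by omega : m + 2 ≠ 0)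
  let κ : ℂ := (∏ l : Fin (m+1), (-R^2)) * Dg (fun x y : Fin (m+1) => q x - q y)
  have hκ : κ ≠ 0 := by
    refine mul_ne_zero (Finset.prod_ne_zero_iff.2 fun l _ => neg_ne_zero.2 (pow_ne_zero _ hR)) ?_
    refine Dg_ne _ fun x y hxy => sub_ne_zero.2 fun e => hxy ?_
    apply Fin.ext
    simpa [q] using e
  let u : Fin (m+1) → C(I, ℂ) := fun l =>
    ⟨fun t => q l / R * Complex.exp (-(2 * Real.pi * Complex.I * ((t : ℝ) : ℂ))), by fun_prop⟩
  have hun : ∀ l t, ‖u l t‖ < 1 := by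
    intro l t
    change ‖q l / R * Complex.exp (-(2 * Real.pi * Complex.I * ((t : ℝ) : ℂ)))‖ < 1
    have e : -(2 * Real.pi * Complex.I * ((t : ℝ) : ℂ)) = ((-(2 * Real.pi * t) : ℝ) : ℂ) * Complex.I := by
      push_cast; ring
    have h1 : q l = (((l : ℕ) + 1 : ℕ) : ℂ) := by simp [q]
    rw [norm_mul, e, Complex.norm_exp_ofReal_mul_I, norm_div, mul_one, h1, Complex.norm_natCast,
      Complex.norm_natCast, div_lt_one (by positivity)]
    have := l.2
    exact_mod_cast (by omega : (l : ℕ) + 1 < m + 2)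
  obtain ⟨ℓ, h1, h2⟩ := lift_prod κ hκ ((2 * m + 2 : ℕ) : ℤ) u hun (by
    intro l
    simp [u, Complex.exp_neg, Complex.exp_two_pi_mul_I])
  refine ⟨ℓ, fun t => ?_, h2⟩
  rw [← h1]
  set E := Complex.exp (2 * Real.pi * Complex.I * ((t : ℝ) : ℂ)) with hE
  have hE0 : E ≠ 0 := Complex.exp_ne_zero _
  have hEn : Complex.exp (((((2 * m + 2 : ℕ) : ℤ)) : ℂ) * (2 * Real.pi * Complex.I) * ((t : ℝ) : ℂ)) =
      ∏ l : Fin (m+1), E ^ 2 := by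
    rw [Finset.prod_const, Finset.card_univ, Fintype.card_fin, ← pow_mul, hE, ← Complex.exp_nat_mul]
    congr 1
    push_cast; ring
  have z0 : Bz m t 0 = R * E := rfl
  have zl : ∀ l : Fin (m+1), Bz m t l.succ = q l := fun l => rfl
  have hu' : ∀ l, u l t = q l / R * E⁻¹ := by
    intro l; rw [hE, ← Complex.exp_neg]; rfl
  rw [Dz, Dg_succ, hEn]
  simp only [z0, zl, hu', κ]
  have key : (∏ l : Fin (m+1), (-R^2)) * (∏ l : Fin (m+1), E ^ 2) * (∏ l, (1 - q l / R * E⁻¹) ^ 2) =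
      (∏ l, (R * E - q l)) * (∏ l, (q l - R * E)) := by
    rw [← Finset.prod_mul_distrib, ← Finset.prod_mul_distrib, ← Finset.prod_mul_distrib]
    refine Finset.prod_congr rfl fun l _ => ?_
    field_simp
    ring
  linear_combination (-Dg (fun x y : Fin (m+1) => q x - q y)) * key

/-- big circle loop -/
noncomputable def Bl (m : ℕ) : C(I, UnordConfigSpace ℂ (m+2)) :=
  mkC (Bz m) (continuous_Bz m) (Bz_inj m)

lemma Bl_loop (m : ℕ) : Bl m 0 = Bl m 1 := by
  apply congrArg pr
  apply Subtype.ext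
  simp [Bz, Complex.exp_two_pi_mul_I]

lemma bsw_loop (m : ℕ) : bsw m 0 = bsw m 1 := by
  apply pr_eq.2
  refine ⟨Equiv.swap 0 1, ?_⟩
  change Tt _ 0 1 _ ∘ _ = Tt _ 0 1 _
  rw [Tt_neg _ (h01 m)]
  congr 1
  simp [Complex.exp_pi_mul_I]

theorem Bl_rel {A : Type} [AddCommGroup A] (m : ℕ) (c : Coc (UnordConfigSpace ℂ (m+2)) A) :
    c.φ (Bl m) = (2 * m + 2 : ℕ) • c.φ (bsw m) := by
  obtain ⟨w, hw⟩ := winding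
  let w' := w.comap (disc (m+2))
  have w1 : w'.φ (bsw m) = 1 := by
    obtain ⟨ℓ, h1, h2⟩ := bz_lift m
    exact hw ℓ _ 1 (fun t => h1 t) (by rw [h2]; simp)
  have w2 : w'.φ (Bl m) = ((2 * m + 2 : ℕ) : ℤ) := by
    obtain ⟨ℓ, h1, h2⟩ := Bz_lift m
    exact hw ℓ _ _ (fun t => h1 t) h2
  obtain ⟨f, hf⟩ := theoremP (c.subMul w' (c.φ (bsw m))) (by
    intro w i j hij ρ h
    rw [swap_eq _ i j hij 0 1 (h01 m) w (bw m) ρ 1 h (bok m)]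
    change c.φ (bsw m) - w'.φ (bsw m) • _ = 0
    rw [w1, one_smul, sub_self])
  have := hf (Bl m) (fun _ => trivial)
  rw [Bl_loop, sub_self] at this
  change c.φ (Bl m) - w'.φ (Bl m) • _ = 0 at this
  rw [w2, sub_eq_zero, natCast_zsmul] at this
  exact this

end disc
end CfgH


open CategoryTheory
open unitInterval Topology

namespace CfgH
section sphere

/-- the sphere -/
abbrev S2 : Type := ↥(Metric.sphere (0 : EuclideanSpace ℝ (Fin 3)) 1)

/-- nonzero vectors -/
abbrev V2 : Type := {v : ℂ × ℂ // v ≠ 0}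

lemma S2_eq (p : S2) : p.1 0 ^ 2 + p.1 1 ^ 2 + p.1 2 ^ 2 = 1 := by
  have h := p.2
  rw [mem_sphere_zero_iff_norm, EuclideanSpace.norm_eq, Real.sqrt_eq_one] at h
  simpa [Fin.sum_univ_three] using h

lemma S2_ext {p q : S2} (h0 : p.1 0 = q.1 0) (h1 : p.1 1 = q.1 1) (h2 : p.1 2 = q.1 2) : p = q := by
  apply Subtype.ext
  ext i
  fin_cases i
  · exact h0
  · exact h1
  · exact h2

/-- constructor -/
noncomputable def mkS (x y z : ℝ) (h : x ^ 2 + y ^ 2 + z ^ 2 = 1) : S2 :=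
  ⟨!₂[x, y, z], by
    rw [mem_sphere_zero_iff_norm, EuclideanSpace.norm_eq, Real.sqrt_eq_one]
    simpa [Fin.sum_univ_three] using h⟩

lemma continuous_mkS {T : Type} [TopologicalSpace T] (x y z : T → ℝ)
    (h : ∀ t, x t ^ 2 + y t ^ 2 + z t ^ 2 = 1) (hx : Continuous x) (hy : Continuous y)
    (hz : Continuous z) : Continuous fun t => mkS (x t) (y t) (z t) (h t) := by
  refine Continuous.subtype_mk ?_ _
  refine (PiLp.continuous_toLp 2 _).comp ?_
  refine continuous_pi fun i => ?_
  fin_cases i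
  · exact hx
  · exact hy
  · exact hz

/-- squared norm -/
def Nn (v : ℂ × ℂ) : ℝ := v.1.re ^ 2 + v.1.im ^ 2 + (v.2.re ^ 2 + v.2.im ^ 2)

lemma Nn_pos (v : V2) : 0 < Nn v.1 := by
  obtain ⟨⟨a, b⟩, h⟩ := v
  have h0 : 0 ≤ Nn (a, b) := by unfold Nn; positivity
  rcases eq_or_lt_of_le h0 with h1 | h1
  · exfalso
    apply h
    simp only [Nn] at h1
    have e1 : a.re = 0 := by nlinarith [sq_nonneg a.re, sq_nonneg a.im, sq_nonneg b.re, sq_nonneg b.im]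
    have e2 : a.im = 0 := by nlinarith [sq_nonneg a.re, sq_nonneg a.im, sq_nonneg b.re, sq_nonneg b.im]
    have e3 : b.re = 0 := by nlinarith [sq_nonneg a.re, sq_nonneg a.im, sq_nonneg b.re, sq_nonneg b.im]
    have e4 : b.im = 0 := by nlinarith [sq_nonneg a.re, sq_nonneg a.im, sq_nonneg b.re, sq_nonneg b.im]
    exact Prod.ext (Complex.ext e1 e2) (Complex.ext e3 e4)
  · exact h1

/-- first coordinate of the Hopf map -/
noncomputable def hx (v : ℂ × ℂ) : ℝ := 2 * (v.1.re * v.2.re + v.1.im * v.2.im) / Nn v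
/-- second coordinate of the Hopf map -/
noncomputable def hy (v : ℂ × ℂ) : ℝ := 2 * (v.1.im * v.2.re - v.1.re * v.2.im) / Nn v
/-- third coordinate of the Hopf map -/
noncomputable def hz (v : ℂ × ℂ) : ℝ := (v.1.re ^ 2 + v.1.im ^ 2 - (v.2.re ^ 2 + v.2.im ^ 2)) / Nn v

lemma h_eq (v : V2) : hx v.1 ^ 2 + hy v.1 ^ 2 + hz v.1 ^ 2 = 1 := by
  have := (Nn_pos v).ne'
  unfold hx hy hz
  field_simp
  unfold Nn
  ring

/-- Hopf map -/
noncomputable def Hf (v : V2) : S2 := mkS (hx v.1) (hy v.1) (hz v.1) (h_eq v)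

lemma continuous_Nn : Continuous fun v : V2 => Nn v.1 := by unfold Nn; fun_prop

lemma continuous_Hf : Continuous Hf := by
  have hn := continuous_Nn
  refine continuous_mkS _ _ _ _ ?_ ?_ ?_
  · unfold hx
    exact Continuous.div (by fun_prop) hn fun v => (Nn_pos v).ne'
  · unfold hy
    exact Continuous.div (by fun_prop) hn fun v => (Nn_pos v).ne'
  · unfold hz
    exact Continuous.div (by fun_prop) hn fun v => (Nn_pos v).ne'

/-- determinant -/
def dt (v w : ℂ × ℂ) : ℂ := v.1 * w.2 - v.2 * w.1

lemma dist_formula (v w : V2) : (hx v.1 - hx w.1) ^ 2 + (hy v.1 - hy w.1) ^ 2 + (hz v.1 - hz w.1) ^ 2 =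
    4 * Complex.normSq (dt v.1 w.1) / (Nn v.1 * Nn w.1) := by
  have h1 := h_eq v
  have h2 := h_eq w
  have e : (hx v.1 - hx w.1) ^ 2 + (hy v.1 - hy w.1) ^ 2 + (hz v.1 - hz w.1) ^ 2 =
      2 - 2 * (hx v.1 * hx w.1 + hy v.1 * hy w.1 + hz v.1 * hz w.1) := by
    linear_combination h1 + h2
  rw [e]
  have a := (Nn_pos v).ne'
  have b := (Nn_pos w).ne'
  unfold hx hy hz
  field_simp
  simp only [Nn, dt, Complex.normSq_apply, Complex.sub_re, Complex.sub_im, Complex.mul_re,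
    Complex.mul_im]
  ring

lemma Hf_eq_iff (v w : V2) : Hf v = Hf w ↔ dt v.1 w.1 = 0 := by
  have h := dist_formula v w
  have a := Nn_pos v
  have b := Nn_pos w
  constructor
  · intro e
    have e0 : hx v.1 = hx w.1 := congrArg (fun p : S2 => p.1 0) e
    have e1 : hy v.1 = hy w.1 := congrArg (fun p : S2 => p.1 1) e
    have e2 : hz v.1 = hz w.1 := congrArg (fun p : S2 => p.1 2) e
    rw [e0, e1, e2, sub_self, sub_self, sub_self] at h
    have h' : 4 * Complex.normSq (dt v.1 w.1) / (Nn v.1 * Nn w.1) = 0 := by rw [← h]; ring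
    rw [div_eq_zero_iff] at h'
    rcases h' with h' | h'
    · exact Complex.normSq_eq_zero.1 (by linarith)
    · exact absurd h' (by positivity)
  · intro e
    rw [e, map_zero, mul_zero, zero_div] at h
    refine S2_ext ?_ ?_ ?_
    · change hx v.1 = hx w.1
      nlinarith [sq_nonneg (hx v.1 - hx w.1), sq_nonneg (hy v.1 - hy w.1), sq_nonneg (hz v.1 - hz w.1)]
    · change hy v.1 = hy w.1
      nlinarith [sq_nonneg (hx v.1 - hx w.1), sq_nonneg (hy v.1 - hy w.1), sq_nonneg (hz v.1 - hz w.1)]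
    · change hz v.1 = hz w.1
      nlinarith [sq_nonneg (hx v.1 - hx w.1), sq_nonneg (hy v.1 - hy w.1), sq_nonneg (hz v.1 - hz w.1)]

/-- `v` represents `p` -/
def Rep (v : ℂ × ℂ) (p : S2) : Prop := ∃ h : v ≠ 0, Hf ⟨v, h⟩ = p

/-- north section -/
noncomputable def vN (p : S2) : ℂ × ℂ := (⟨1 + p.1 2, 0⟩, ⟨p.1 0, -p.1 1⟩)
/-- south section -/
noncomputable def vS (p : S2) : ℂ × ℂ := (⟨p.1 0, p.1 1⟩, ⟨1 - p.1 2, 0⟩)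

lemma continuous_coord (i : Fin 3) : Continuous fun p : S2 => p.1 i :=
  (continuous_apply i).comp ((PiLp.continuous_ofLp 2 _).comp continuous_subtype_val)

lemma continuous_mkc {T : Type} [TopologicalSpace T] (x y : T → ℝ) (hx : Continuous x)
    (hy : Continuous y) : Continuous fun t => (⟨x t, y t⟩ : ℂ) := by
  have : (fun t => (⟨x t, y t⟩ : ℂ)) = fun t => (x t : ℂ) + y t * Complex.I := by
    ext t; exact Complex.mk_eq_add_mul_I _ _
  rw [this]; fun_prop

lemma continuous_vN : Continuous vN := by
  have h := continuous_coord
  exact (continuous_mkc _ _ (continuous_const.add (h 2)) continuous_const).prodMk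
    (continuous_mkc _ _ (h 0) (h 1).neg)

lemma continuous_vS : Continuous vS := by
  have h := continuous_coord
  exact (continuous_mkc _ _ (h 0) (h 1)).prodMk
    (continuous_mkc _ _ (continuous_const.sub (h 2)) continuous_const)

lemma rep_vN (p : S2) (h : 1 + p.1 2 ≠ 0) : Rep (vN p) p := by
  have hp := S2_eq p
  have hn : vN p ≠ 0 := by
    intro e
    exact h (congrArg (fun v : ℂ × ℂ => v.1.re) e)
  refine ⟨hn, ?_⟩
  have hN : Nn (vN p) = 2 * (1 + p.1 2) := by
    simp only [Nn, vN]
    linear_combination hp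
  refine S2_ext ?_ ?_ ?_
  · change hx (vN p) = p.1 0
    rw [hx, hN]; simp only [vN]; field_simp; ring
  · change hy (vN p) = p.1 1
    rw [hy, hN]; simp only [vN]; field_simp; ring
  · change hz (vN p) = p.1 2
    rw [hz, hN]; simp only [vN]; field_simp; linear_combination -hp

lemma rep_vS (p : S2) (h : 1 - p.1 2 ≠ 0) : Rep (vS p) p := by
  have hp := S2_eq p
  have hn : vS p ≠ 0 := by
    intro e
    exact h (congrArg (fun v : ℂ × ℂ => v.2.re) e)
  refine ⟨hn, ?_⟩
  have hN : Nn (vS p) = 2 * (1 - p.1 2) := by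
    simp only [Nn, vS]
    linear_combination hp
  refine S2_ext ?_ ?_ ?_
  · change hx (vS p) = p.1 0
    rw [hx, hN]; simp only [vS]; field_simp; ring
  · change hy (vS p) = p.1 1
    rw [hy, hN]; simp only [vS]; field_simp; ring
  · change hz (vS p) = p.1 2
    rw [hz, hN]; simp only [vS]; field_simp; linear_combination hp

lemma locLift (p : S2) : ∃ U : Set S2, IsOpen U ∧ p ∈ U ∧ ∃ v : S2 → ℂ × ℂ, Continuous v ∧
    ∀ q ∈ U, Rep (v q) q := by
  have h := continuous_coord 2
  by_cases hp : 1 + p.1 2 = 0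
  · refine ⟨{q | 1 - q.1 2 ≠ 0}, isOpen_ne_fun (continuous_const.sub h) continuous_const, ?_, vS,
      continuous_vS, fun q hq => rep_vS q hq⟩
    change 1 - p.1 2 ≠ 0
    intro e
    linarith
  · exact ⟨{q | 1 + q.1 2 ≠ 0}, isOpen_ne_fun (continuous_const.add h) continuous_const, hp, vN,
      continuous_vN, fun q hq => rep_vN q hq⟩

lemma exists_rep (p : S2) : ∃ v, Rep v p := by
  obtain ⟨U, _, hp, v, _, h⟩ := locLift p
  exact ⟨v p, h p hp⟩

lemma rep_eq {v w : ℂ × ℂ} {p q : S2} (hv : Rep v p) (hw : Rep w q) : p = q ↔ dt v w = 0 := by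
  obtain ⟨h1, rfl⟩ := hv
  obtain ⟨h2, rfl⟩ := hw
  exact Hf_eq_iff _ _

lemma dt_prop {v w : ℂ × ℂ} (hv : v ≠ 0) (h : dt v w = 0) : ∃ c : ℂ, w = c • v := by
  obtain ⟨a, b⟩ := v
  obtain ⟨x, y⟩ := w
  simp only [dt] at h
  by_cases ha : a = 0
  · have hb : b ≠ 0 := by
      rintro rfl; exact hv (by rw [ha]; rfl)
    refine ⟨y / b, Prod.ext ?_ ?_⟩
    · rw [ha, zero_mul, zero_sub, neg_eq_zero] at h
      rcases mul_eq_zero.1 h with h | h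
      · exact absurd h hb
      · simp [ha, h]
    · simp [hb]
  · refine ⟨x / a, Prod.ext ?_ ?_⟩
    · simp [ha]
    · simp
      field_simp
      linear_combination h

end sphere
end CfgH


open CategoryTheory
open unitInterval Topology

namespace CfgH
section charts

/-- shorthand for homogeneous coordinates -/
lemma pne2 {a b : ℂ} (h : a ≠ 0 ∨ b ≠ 0) : (a, b) ≠ (0 : ℂ × ℂ) := by
  intro e
  have e1 : a = 0 := congrArg Prod.fst e
  have e2 : b = 0 := congrArg Prod.snd e
  tauto

lemma es_ne (s z : ℂ) : (z, s * z + 1) ≠ (0 : ℂ × ℂ) := by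
  apply pne2
  by_cases h : z = 0
  · right; simp [h]
  · exact Or.inl h

/-- charts, jointly continuous -/
noncomputable def es2 (s z : ℂ) : S2 := Hf ⟨(z, s * z + 1), es_ne s z⟩

lemma continuous_es2 {T : Type} [TopologicalSpace T] (s z : T → ℂ) (hs : Continuous s)
    (hz : Continuous z) : Continuous fun t => es2 (s t) (z t) :=
  continuous_Hf.comp (Continuous.subtype_mk (by fun_prop) _)

/-- chart -/
noncomputable def es (s : ℂ) : C(ℂ, S2) :=
  ⟨es2 s, continuous_es2 _ _ continuous_const continuous_id⟩

/-- missing point -/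
noncomputable def qs (s : ℂ) : S2 := Hf ⟨(1, s), pne2 (Or.inl one_ne_zero)⟩

lemma rep_es (s z : ℂ) : Rep (z, s * z + 1) (es s z) := ⟨es_ne s z, rfl⟩
lemma rep_qs (s : ℂ) : Rep (1, s) (qs s) := ⟨_, rfl⟩

lemma es_inj (s : ℂ) : Function.Injective (es s) := by
  intro z w h
  have := (rep_eq (rep_es s z) (rep_es s w)).1 h
  simp only [dt] at this
  linear_combination this

lemma qs_inj : Function.Injective qs := by
  intro z w h
  have := (rep_eq (rep_qs z) (rep_qs w)).1 h
  simp only [dt] at this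
  linear_combination -this

lemma es_of_rep (s : ℂ) {v : ℂ × ℂ} {p : S2} (hv : Rep v p) (h : v.2 - s * v.1 ≠ 0) :
    es s (v.1 / (v.2 - s * v.1)) = p := by
  rw [rep_eq (rep_es s _) hv]
  obtain ⟨a, b⟩ := v
  simp only [dt] at h ⊢
  have e : a / (b - s * a) * (b - s * a) = a := div_mul_cancel₀ _ h
  linear_combination e

lemma ne_qs_iff (s : ℂ) {v : ℂ × ℂ} {p : S2} (hv : Rep v p) : p ≠ qs s ↔ v.2 - s * v.1 ≠ 0 := by
  rw [not_iff_not, rep_eq hv (rep_qs s)]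
  simp only [dt]
  constructor <;> intro h <;> linear_combination -h

lemma es_ne_qs (s z : ℂ) : es s z ≠ qs s := by
  rw [ne_qs_iff s (rep_es s z)]
  simp

lemma range_es (s : ℂ) : Set.range (es s) = {qs s}ᶜ := by
  ext p
  simp only [Set.mem_range, Set.mem_compl_iff, Set.mem_singleton_iff]
  constructor
  · rintro ⟨z, rfl⟩
    exact es_ne_qs s z
  · intro h
    obtain ⟨v, hv⟩ := exists_rep p
    exact ⟨_, es_of_rep s hv ((ne_qs_iff s hv).1 h)⟩

lemma isOpenEmbedding_es (s : ℂ) : IsOpenEmbedding (es s) := by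
  refine IsOpenEmbedding.of_continuous_injective_isOpenMap (es s).continuous (es_inj s) ?_
  rw [isOpenMap_iff_nhds_le]
  intro z W hW
  rw [Filter.mem_map] at hW
  obtain ⟨U, hU, hp, v, hv, hr⟩ := locLift (es s z)
  have hd : (v (es s z)).2 - s * (v (es s z)).1 ≠ 0 := (ne_qs_iff s (hr _ hp)).1 (es_ne_qs s z)
  let g : S2 → ℂ := fun q => (v q).1 / ((v q).2 - s * (v q).1)
  have hc1 : Continuous fun q => (v q).2 - s * (v q).1 := by fun_prop
  have hg : ContinuousAt g (es s z) := 
    ContinuousAt.div (hv.fst.continuousAt) hc1.continuousAt hd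
  have hgz : g (es s z) = z := es_inj s (es_of_rep s (hr _ hp) hd)
  have h1 := hg.preimage_mem_nhds (by rw [hgz]; exact hW)
  have h2 : ∀ᶠ q in 𝓝 (es s z), (v q).2 - s * (v q).1 ≠ 0 := hc1.continuousAt.eventually_ne hd
  filter_upwards [h1, h2, hU.mem_nhds hp] with q a b c
  have := es_of_rep s (hr q c) b
  rw [← this]
  exact a

/-- chart on configurations -/
noncomputable def mE (k : ℕ) (s : ℂ) : C(UnordConfigSpace ℂ k, UnordConfigSpace S2 k) :=
  mapC (es s) (es_inj s)

lemma mem_range_mE {k : ℕ} (s : ℂ) (f : Fk S2 k) :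
    pr f ∈ Set.range (mE k s) ↔ ∀ i, f.1 i ≠ qs s := by
  constructor
  · rintro ⟨x, hx⟩ i
    obtain ⟨g, rfl⟩ := pr_surj x
    obtain ⟨p, hp⟩ := pr_eq.1 hx
    have : f.1 (i) = es s (g.1 (p i)) := (congr_fun hp i).symm
    rw [this]
    exact es_ne_qs _ _
  · intro h
    have : ∀ i, ∃ z, es s z = f.1 i := fun i => by
      have : f.1 i ∈ Set.range (es s) := by rw [range_es]; exact h i
      exact this
    choose g hg using this
    refine ⟨pr ⟨g, fun i j hij => f.2 ?_⟩, ?_⟩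
    · rw [← hg, ← hg, hij]
    · apply congrArg pr
      apply Subtype.ext
      ext1 i
      exact hg i

lemma isOpenEmbedding_mE (k : ℕ) (s : ℂ) : IsOpenEmbedding (mE k s) :=
  isOpenEmbedding_mapC (es s) (isOpenEmbedding_es s)

/-- the generator -/
noncomputable def gen (m : ℕ) : C(I, UnordConfigSpace S2 (m+2)) := (mE (m+2) 0).comp (bsw m)

lemma gen_loop (m : ℕ) : gen m 0 = gen m 1 := congrArg (mE (m+2) 0) (bsw_loop m)

lemma gen_free {A : Type} [AddCommGroup A] (m : ℕ) (c : Coc (UnordConfigSpace S2 (m+2)) A) (s : ℂ) :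
    c.φ ((mE (m+2) s).comp (bsw m)) = c.φ (gen m) := by
  let h : C(I × I, UnordConfigSpace S2 (m+2)) :=
    mkC (fun x i => es2 (((x.1 : ℝ) : ℂ) * s) (bz m x.2 i))
      (continuous_pi fun i => continuous_es2 _ _ (by fun_prop)
        ((continuous_apply i).comp ((continuous_bz m).comp continuous_snd)))
      (fun x i j hij => bz_inj m x.2 (es_inj _ hij))
  have key : ∀ r t, h (r, t) = mE (m+2) (((r : ℝ) : ℂ) * s) (bsw m t) := fun r t => rfl
  have := c.free h (fun r => by rw [key, key, bsw_loop])
  have e0 : h.comp ⟨fun s => (0, s), by fun_prop⟩ = gen m := by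
    ext1 t
    change h (0, t) = _
    rw [key]
    simp [gen]
  have e1 : h.comp ⟨fun s => (1, s), by fun_prop⟩ = (mE (m+2) s).comp (bsw m) := by
    ext1 t
    change h (1, t) = _
    rw [key]
    simp
  rw [← e0, ← e1]
  exact this.symm

lemma nl_ne (m : ℕ) (x : I × I) (i : Fin (m+2)) :
    ((Bz m x.2 i, if i = 0 then ((x.1 : ℝ) : ℂ) else 1) : ℂ × ℂ) ≠ 0 := by
  apply pne2
  by_cases h : i = 0
  · left
    subst h
    intro e
    have := Bz_norm0 m x.2
    rw [e, norm_zero] at this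
    have : (0:ℝ) < m + 2 := by positivity
    linarith
  · right; simp [h]

theorem gen_rel {A : Type} [AddCommGroup A] (m : ℕ) (c : Coc (UnordConfigSpace S2 (m+2)) A) :
    (2 * m + 2 : ℕ) • c.φ (gen m) = 0 := by
  have h1 := Bl_rel m (c.comap (mE (m+2) 0))
  have h2 : (2 * m + 2 : ℕ) • c.φ (gen m) = c.φ ((mE (m+2) 0).comp (Bl m)) := h1.symm
  rw [h2]
  have inj : ∀ x : I × I, Function.Injective (fun i => Hf ⟨_, nl_ne m x i⟩) := by
    intro x
    have key : ∀ l : Fin (m+1), Hf ⟨_, nl_ne m x 0⟩ ≠ Hf ⟨_, nl_ne m x l.succ⟩ := by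
      intro l e
      rw [Hf_eq_iff] at e
      simp only [dt, if_true, Fin.succ_ne_zero, if_false, mul_one] at e
      have e' := congrArg norm (sub_eq_zero.1 e)
      rw [norm_mul, Bz_norm0, Bz_norm, Complex.norm_real, Real.norm_of_nonneg x.1.2.1] at e'
      have hl : ((l : ℕ) : ℝ) + 1 ≤ m + 1 := by exact_mod_cast l.2
      have := x.1.2.2
      nlinarith [x.1.2.1]
    intro i j
    refine Fin.cases ?_ (fun i => ?_) i <;> refine Fin.cases ?_ (fun j => ?_) j
    · simp
    · intro h; exact absurd h (key j)
    · intro h; exact absurd h.symm (key i)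
    · intro h
      have h' := (Hf_eq_iff _ _).1 h
      simp only [dt, Fin.succ_ne_zero, if_false, mul_one, one_mul] at h'
      exact Bz_inj m x.2 (sub_eq_zero.1 h')
  let h : C(I × I, UnordConfigSpace S2 (m+2)) :=
    mkC (fun x i => Hf ⟨_, nl_ne m x i⟩)
      (continuous_pi fun i => continuous_Hf.comp (Continuous.subtype_mk (by
        refine Continuous.prodMk ((continuous_apply i).comp ((continuous_Bz m).comp continuous_snd)) ?_
        split_ifs <;> fun_prop) _)) inj
  have hB : Bz m 0 = Bz m 1 := by
    simp [Bz, Complex.exp_two_pi_mul_I]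
  have := c.free h (fun r => by
    apply congrArg pr
    apply Subtype.ext
    funext i
    apply congrArg Hf
    apply Subtype.ext
    simp only [hB])
  have e1 : h.comp ⟨fun s => (1, s), by fun_prop⟩ = (mE (m+2) 0).comp (Bl m) := by
    ext1 t
    apply congrArg pr
    apply Subtype.ext
    funext i
    apply congrArg Hf
    apply Subtype.ext
    simp
  have e0 : h.comp ⟨fun s => (0, s), by fun_prop⟩ = ContinuousMap.const I (h (0, 0)) := by
    ext1 t
    apply congrArg pr
    apply Subtype.ext
    funext i
    refine (Hf_eq_iff _ _).2 ?_
    refine Fin.cases ?_ (fun i => ?_) i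
    · simp [dt]
    · simp [dt, Bz]
  rw [e0, e1, Coc.const] at this
  exact this.symm

theorem gen_gen {A : Type} [AddCommGroup A] (m : ℕ) (c : Coc (UnordConfigSpace S2 (m+2)) A)
    (h0 : c.φ (gen m) = 0) : ∃ f, c.Pot Set.univ f := by
  have hpot : ∀ s : ℂ, ∃ f, c.Pot (Set.range (mE (m+2) s)) f := by
    intro s
    refine c.pot_embedding (mE (m+2) s) (isOpenEmbedding_mE _ s).isEmbedding ?_
    refine theoremP _ fun w i j hij ρ h => ?_
    rw [swap_eq _ i j hij 0 1 (h01 m) w (bw m) ρ 1 h (bok m)]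
    change c.φ ((mE (m+2) s).comp (bsw m)) = 0
    rw [gen_free, h0]
  choose f hf using hpot
  refine c.glue (fun s : ℂ => Set.range (mE (m+2) s)) f 0 (fun s => (isOpenEmbedding_mE _ s).isOpen_range)
    ?_ hf ?_ ?_
  · have hc : ∀ x, ∃ s : ℂ, x ∈ Set.range (mE (m+2) s) := by
      intro x
      obtain ⟨g, rfl⟩ := pr_surj x
      have fin : (⋃ i, {s : ℂ | g.1 i = qs s}).Finite := Set.finite_iUnion fun i =>
        Set.Subsingleton.finite fun a ha b hb => qs_inj ((show g.1 i = qs a from ha).symm.trans hb)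
      obtain ⟨s, hs⟩ := fin.infinite_compl.nonempty
      refine ⟨s, (mem_range_mE s g).2 fun i e => hs (Set.mem_iUnion.2 ⟨i, e⟩)⟩
    exact hc
  · rintro s s' x y ⟨x, rfl⟩ hx' ⟨y, rfl⟩ hy'
    obtain ⟨g, rfl⟩ := pr_surj x
    obtain ⟨g', rfl⟩ := pr_surj y
    have hx2 := (mem_range_mE s' (mapF (es s) (es_inj s) g)).1 hx'
    have hy2 := (mem_range_mE s' (mapF (es s) (es_inj s) g')).1 hy'
    obtain ⟨γ, h0, h1, hγ⟩ := joined_Fk (m+2) {w | es s w = qs s'}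
      (Set.Subsingleton.finite fun a ha b hb => es_inj s ((show es s a = _ from ha).trans (show es s b = _ from hb).symm)) g g' hx2 hy2
    let Γ : C(I, UnordConfigSpace S2 (m+2)) := ⟨fun t => mE (m+2) s (pr (γ t)),
      (mE (m+2) s).continuous.comp (continuous_pr.comp γ.continuous)⟩
    have a1 := hf s Γ (fun t => ⟨pr (γ t), rfl⟩)
    have a2 := hf s' Γ (fun t => (mem_range_mE s' (mapF (es s) (es_inj s) (γ t))).2 fun i e => hγ t i e)
    have b0 : Γ 0 = mE (m+2) s (pr g) := by change mE (m+2) s (pr (γ 0)) = _; rw [h0]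
    have b1 : Γ 1 = mE (m+2) s (pr g') := by change mE (m+2) s (pr (γ 1)) = _; rw [h1]
    rw [b0, b1] at a1 a2
    rw [a1] at a2
    rw [sub_eq_sub_iff_add_eq_add] at a2 ⊢
    rw [← sub_eq_zero] at a2 ⊢
    rw [← neg_eq_zero, ← a2]
    abel
  · intro s s' s''
    have hi : Set.InjOn qs (({s, s', s''} : Set ℂ)ᶜ) := qs_inj.injOn
    have hinf : (({s, s', s''} : Set ℂ)ᶜ).Infinite := (Set.toFinite _).infinite_compl
    let e := hinf.natEmbedding
    let g : Fk S2 (m+2) := ⟨fun i => qs (e (i : ℕ)), fun i j hij =>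
      Fin.ext (e.injective (Subtype.ext (qs_inj hij)))⟩
    have hg : ∀ i, (e (i : ℕ) : ℂ) ∉ ({s, s', s''} : Set ℂ) := fun i => (e i).2
    simp only [Set.mem_insert_iff, Set.mem_singleton_iff, not_or] at hg
    exact ⟨pr g, (mem_range_mE _ g).2 fun i h => (hg i).1 (qs_inj h),
      (mem_range_mE _ g).2 fun i h => (hg i).2.1 (qs_inj h),
      (mem_range_mE _ g).2 fun i h => (hg i).2.2 (qs_inj h)⟩

end charts
end CfgH


open CategoryTheory
open unitInterval Topology

namespace CfgH
section lower

lemma Dg_mul {k : ℕ} (d e : Fin k → Fin k → ℂ) : Dg (fun x y => d x y * e x y) = Dg d * Dg e := by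
  unfold Dg
  rw [← Finset.prod_mul_distrib]
  refine Finset.prod_congr rfl fun x _ => ?_
  rw [← Finset.prod_mul_distrib]
  refine Finset.prod_congr rfl fun y _ => ?_
  split_ifs <;> simp

lemma Dg_left {k : ℕ} (a : Fin (k+1) → ℂ) : Dg (fun x _ => a x) = (∏ x, a x) ^ k := by
  unfold Dg
  rw [← Finset.prod_pow]
  refine Finset.prod_congr rfl fun x _ => ?_
  rw [Fin.prod_univ_succAbove _ x]
  simp [Fin.ne_succAbove]

lemma Dg_right {k : ℕ} (a : Fin (k+1) → ℂ) : Dg (fun _ y => a y) = (∏ x, a x) ^ k := by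
  rw [← Dg_left]
  unfold Dg
  rw [Finset.prod_comm]
  refine Finset.prod_congr rfl fun x _ => Finset.prod_congr rfl fun y _ => ?_
  simp only [eq_comm]

lemma Dg_scale {k : ℕ} (a : Fin (k+1) → ℂ) (d : Fin (k+1) → Fin (k+1) → ℂ) :
    Dg (fun x y => a x * a y * d x y) = (∏ x, a x) ^ (2 * k) * Dg d := by
  rw [Dg_mul (fun x y => a x * a y) d, Dg_mul (fun x _ => a x) (fun _ y => a y), Dg_left, Dg_right]
  ring

/-- nonzero vectors -/
def VV (k : ℕ) : Type := {F : Fin (k+1) → ℂ // F ≠ 0}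

instance (k : ℕ) : TopologicalSpace (VV k) := inferInstanceAs (TopologicalSpace {F : Fin (k+1) → ℂ // F ≠ 0})
instance (k : ℕ) : T2Space (VV k) := inferInstanceAs (T2Space {F : Fin (k+1) → ℂ // F ≠ 0})
instance (k : ℕ) : LocallyCompactSpace (VV k) := by
  have : IsOpen {F : Fin (k+1) → ℂ | F ≠ 0} := isOpen_ne
  exact this.locallyCompactSpace

instance (k : ℕ) : MulAction ℂˣ (VV k) where
  smul u F := ⟨fun j => u * F.1 j, fun h => F.2 (by
    funext j
    have := congr_fun h j
    simpa using this)⟩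
  one_smul F := by
    apply Subtype.ext
    funext j
    exact one_mul _
  mul_smul u w F := by
    apply Subtype.ext
    funext j
    exact mul_assoc _ _ _

lemma VV_smul {k : ℕ} (u : ℂˣ) (F : VV k) (j) : (u • F).1 j = u * F.1 j := rfl

/-- roots of unity -/
abbrev Mu (n : ℕ) : Type := ↥(rootsOfUnity n ℂ)

lemma Mu_smul {k n : ℕ} (u : Mu n) (F : VV k) (j) : (u • F).1 j = ((u : ℂˣ) : ℂ) * F.1 j := rfl

instance (k n : ℕ) : ContinuousConstSMul (Mu n) (VV k) where
  continuous_const_smul u := by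
    refine Continuous.subtype_mk ?_ _
    refine continuous_pi fun j => ?_
    exact continuous_const.mul ((continuous_apply j).comp continuous_subtype_val)

instance (k n : ℕ) : IsCancelSMul (Mu n) (VV k) where
  right_cancel' u w F h := by
    obtain ⟨j, hj⟩ := Function.ne_iff.1 F.2
    have := congr_fun (congrArg Subtype.val h) j
    rw [Mu_smul, Mu_smul] at this
    exact Subtype.ext (Units.ext (mul_right_cancel₀ hj this))

/-- quotient -/
abbrev QQ (k n : ℕ) : Type := Quotient (MulAction.orbitRel (Mu n) (VV k))

/-- quotient map -/
def qm (k n : ℕ) : C(VV k, QQ k n) := ⟨Quotient.mk _, continuous_quotient_mk'⟩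

lemma qm_cov (k n : ℕ) [NeZero n] : IsQuotientCoveringMap (qm k n) (Mu n) :=
  isQuotientCoveringMap_quotientMk_of_properlyDiscontinuousSMul (G := Mu n) (E := VV k)

/-- the vector of values -/
noncomputable def FF {k : ℕ} (v : Fin k → ℂ × ℂ) (c : ℂ) : Fin (k+1) → ℂ :=
  fun j => c * ∏ i, dt (v i) (1, ((j : ℕ) : ℂ))

lemma FF_ne {k : ℕ} (v : Fin k → ℂ × ℂ) (c : ℂ) (hv : ∀ i, v i ≠ 0) (hc : c ≠ 0) : FF v c ≠ 0 := by
  intro h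
  have : ∀ j : Fin (k+1), ∃ i, dt (v i) (1, ((j : ℕ) : ℂ)) = 0 := by
    intro j
    have := congr_fun h j
    rcases mul_eq_zero.1 this with h | h
    · exact absurd h hc
    · obtain ⟨i, _, hi⟩ := Finset.prod_eq_zero_iff.1 h
      exact ⟨i, hi⟩
  choose g hg using this
  obtain ⟨j, j', hne, he⟩ := Fintype.exists_ne_map_eq_of_card_lt g (by simp)
  have h1 := hg j
  have h2 := hg j'
  rw [← he] at h2
  apply hv (g j)
  simp only [dt] at h1 h2
  have h3 : (v (g j)).1 * (((j : ℕ) : ℂ) - ((j' : ℕ) : ℂ)) = 0 := by linear_combination h1 - h2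
  have h4 : ((j : ℕ) : ℂ) - ((j' : ℕ) : ℂ) ≠ 0 := by
    intro e
    rw [sub_eq_zero] at e
    exact hne (Fin.ext (by exact_mod_cast e))
  have h5 := (mul_eq_zero.1 h3).resolve_right h4
  rw [h5] at h1
  exact Prod.ext h5 (by simpa using h1)

/-- compatible data -/
def Dat {m : ℕ} (f : Fk S2 (m+2)) (v : Fin (m+2) → ℂ × ℂ) (c : ℂ) : Prop :=
  (∀ i, Rep (v i) (f.1 i)) ∧ c ^ (2 * m + 2) * Dg (fun x y => dt (v x) (v y)) = 1

variable {m : ℕ}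

lemma Dat.c_ne {f : Fk S2 (m+2)} {v : Fin (m+2) → ℂ × ℂ} {c : ℂ} (h : Dat f v c) : c ≠ 0 := by
  rintro rfl
  have := h.2
  rw [zero_pow (by omega), zero_mul] at this
  exact zero_ne_one this

/-- value -/
noncomputable def Dat.val {f : Fk S2 (m+2)} {v : Fin (m+2) → ℂ × ℂ} {c : ℂ} (h : Dat f v c) :
    VV (m+2) := ⟨FF v c, FF_ne v c (fun i => (h.1 i).1) h.c_ne⟩

lemma rep_D_ne {f : Fk S2 (m+2)} {v : Fin (m+2) → ℂ × ℂ} (h : ∀ i, Rep (v i) (f.1 i)) :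
    Dg (fun x y => dt (v x) (v y)) ≠ 0 :=
  Dg_ne _ fun x y hxy e => hxy (f.2 ((rep_eq (h x) (h y)).2 e))

lemma exists_c {f : Fk S2 (m+2)} {v : Fin (m+2) → ℂ × ℂ} (h : ∀ i, Rep (v i) (f.1 i)) :
    ∃ c, Dat f v c := by
  obtain ⟨c, hc⟩ := IsAlgClosed.exists_pow_nat_eq (Dg (fun x y => dt (v x) (v y)))⁻¹
    (n := 2 * m + 2) (by omega)
  exact ⟨c, h, by rw [hc, inv_mul_cancel₀ (rep_D_ne h)]⟩

lemma exists_dat (x : UnordConfigSpace S2 (m+2)) : ∃ F : VV (m+2), ∃ f v c, ∃ h : Dat f v c,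
    pr f = x ∧ F = h.val := by
  obtain ⟨f, rfl⟩ := pr_surj x
  choose v hv using fun i => exists_rep (f.1 i)
  obtain ⟨c, h⟩ := exists_c (f := f) hv
  exact ⟨h.val, f, v, c, h, rfl, rfl⟩

lemma dt_smul (a b : ℂ) (v w : ℂ × ℂ) : dt (a • v) (b • w) = a * b * dt v w := by
  simp [dt]; ring

lemma dat_eq {f g : Fk S2 (m+2)} {v v' : Fin (m+2) → ℂ × ℂ} {c c' : ℂ} (h : Dat f v c)
    (h' : Dat g v' c') (hp : pr f = pr g) : qm (m+2) (2*m+2) h.val = qm (m+2) (2*m+2) h'.val := by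
  obtain ⟨p, hp⟩ := pr_eq.1 hp
  have : ∀ i, ∃ a : ℂ, v' i = a • v (p i) := by
    intro i
    refine dt_prop (h.1 (p i)).1 ((rep_eq (h.1 (p i)) (h'.1 i)).1 ?_)
    exact congr_fun hp i
  choose a ha using this
  have hF : ∀ j, FF v' c' j = c' * (∏ i, a i) * ∏ i, dt (v i) (1, ((j : ℕ) : ℂ)) := by
    intro j
    have h1 : ∀ i, dt (v' i) (1, ((j : ℕ) : ℂ)) = a i * dt (v (p i)) (1, ((j : ℕ) : ℂ)) := by
      intro i
      rw [ha]
      simp [dt]; ring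
    simp only [FF, h1, Finset.prod_mul_distrib]
    rw [Equiv.prod_comp p (fun i => dt (v i) (1, ((j : ℕ) : ℂ)))]
    ring
  have hD : Dg (fun x y => dt (v' x) (v' y)) = (∏ i, a i) ^ (2 * m + 2) * Dg (fun x y => dt (v x) (v y)) := by
    simp only [ha, dt_smul]
    rw [Dg_scale a (fun x y => dt (v (p x)) (v (p y))), Dg_perm (fun x y => dt (v x) (v y)) p]
    ring
  have e1 := h.2
  have e2 := h'.2
  rw [hD] at e2
  have hc := h.c_ne
  have hD0 := rep_D_ne h.1
  have hu : (c' * (∏ i, a i) / c) ^ (2 * m + 2) = 1 := by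
    rw [div_pow, mul_pow, div_eq_one_iff_eq (pow_ne_zero _ hc)]
    apply mul_right_cancel₀ hD0
    rw [e1, ← e2]; ring
  have hu0 : c' * (∏ i, a i) / c ≠ 0 := by
    intro e
    rw [e, zero_pow (by omega)] at hu
    exact zero_ne_one hu
  let u : Mu (2*m+2) := ⟨Units.mk0 _ hu0, by
    rw [mem_rootsOfUnity]
    apply Units.ext
    simpa using hu⟩
  symm
  refine Quotient.sound ?_
  refine ⟨u, ?_⟩
  apply Subtype.ext
  funext j
  rw [Mu_smul]
  change c' * (∏ i, a i) / c * FF v c j = FF v' c' j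
  rw [hF, FF]
  field_simp

/-- the classifying map -/
noncomputable def gX (x : UnordConfigSpace S2 (m+2)) : QQ (m+2) (2*m+2) :=
  qm (m+2) (2*m+2) (exists_dat x).choose

lemma gX_eq {f : Fk S2 (m+2)} {v : Fin (m+2) → ℂ × ℂ} {c : ℂ} (h : Dat f v c) :
    gX (pr f) = qm (m+2) (2*m+2) h.val := by
  obtain ⟨f', v', c', h', e, e'⟩ := (exists_dat (pr f)).choose_spec
  rw [gX, e']
  exact dat_eq _ _ e

lemma continuous_FF {T : Type} [TopologicalSpace T] {k : ℕ} (v : T → Fin k → ℂ × ℂ) (c : T → ℂ)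
    (hv : ∀ i, Continuous fun t => v t i) (hc : Continuous c) : Continuous fun t => FF (v t) (c t) := by
  unfold FF dt
  fun_prop

lemma continuous_gX : Continuous (gX : UnordConfigSpace S2 (m+2) → QQ (m+2) (2*m+2)) := by
  rw [isQuotientMap_pr.continuous_iff, continuous_iff_continuousAt]
  intro f0
  choose U hU hp v hv hr using fun i => locLift (f0.1 i)
  let w : Fk S2 (m+2) → Fin (m+2) → ℂ × ℂ := fun f i => v i (f.1 i)
  have hw : ∀ i, Continuous fun f => w f i := fun i =>
    (hv i).comp ((continuous_apply i).comp continuous_subtype_val)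
  let D : Fk S2 (m+2) → ℂ := fun f => Dg fun x y => dt (w f x) (w f y)
  have hD : Continuous D := continuous_Dg _ fun x y => by
    have := hw x; have := hw y
    unfold dt; fun_prop
  have hr0 : ∀ i, Rep (w f0 i) (f0.1 i) := fun i => hr i _ (hp i)
  have hD0 : D f0 ≠ 0 := rep_D_ne hr0
  obtain ⟨c0, hc0⟩ := exists_c hr0
  let N : Set (Fk S2 (m+2)) := (⋂ i, {f | f.1 i ∈ U i}) ∩ {f | D f / D f0 ∈ Complex.slitPlane}
  have hN : IsOpen N := by
    refine IsOpen.inter (isOpen_iInter_of_finite fun i =>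
      (hU i).preimage ((continuous_apply i).comp continuous_subtype_val)) ?_
    exact Complex.isOpen_slitPlane.preimage (hD.div_const _)
  have h0N : f0 ∈ N := by
    refine ⟨Set.mem_iInter.2 hp, ?_⟩
    change D f0 / D f0 ∈ Complex.slitPlane
    rw [div_self hD0]
    exact Complex.one_mem_slitPlane
  let c : Fk S2 (m+2) → ℂ := fun f => c0 * Complex.exp (-Complex.log (D f / D f0) / ((2 * m + 2 : ℕ) : ℂ))
  have hdat : ∀ f : N, Dat f.1 (w f.1) (c f.1) := by
    rintro ⟨f, hf⟩
    refine ⟨fun i => hr i _ (Set.mem_iInter.1 hf.1 i), ?_⟩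
    have hn : ((2 * m + 2 : ℕ) : ℂ) ≠ 0 := by exact_mod_cast (by omega : 2 * m + 2 ≠ 0)
    have hs : D f / D f0 ≠ 0 := Complex.slitPlane_ne_zero hf.2
    have e : Complex.exp (-Complex.log (D f / D f0) / ((2 * m + 2 : ℕ) : ℂ)) ^ (2 * m + 2) =
        (D f / D f0)⁻¹ := by
      rw [← Complex.exp_nat_mul, mul_div_cancel₀ _ hn, Complex.exp_neg, Complex.exp_log hs]
    change (c0 * _) ^ (2 * m + 2) * D f = 1
    rw [mul_pow, e]
    have h2 : c0 ^ (2 * m + 2) * D f0 = 1 := hc0.2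
    have hDf : D f ≠ 0 := fun e => hs (by rw [e, zero_div])
    rw [inv_div, mul_assoc, div_mul_cancel₀ _ hDf, h2]
  have hcN : Continuous fun f : N => c f.1 := by
    refine continuous_const.mul (Complex.continuous_exp.comp (Continuous.div_const (Continuous.neg ?_) _))
    exact Continuous.clog ((hD.div_const _).comp continuous_subtype_val) fun f => f.2.2
  have hval : Continuous fun f : N => (hdat f).val :=
    Continuous.subtype_mk (continuous_FF _ _ (fun i => (hw i).comp continuous_subtype_val) hcN) _
  have hon : ContinuousOn (gX ∘ pr : Fk S2 (m+2) → QQ (m+2) (2*m+2)) N := by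
    rw [continuousOn_iff_continuous_domRestrict]
    have : N.domRestrict (gX ∘ pr : Fk S2 (m+2) → QQ (m+2) (2*m+2)) =
        fun f : N => qm (m+2) (2*m+2) (hdat f).val := by
      funext f
      exact gX_eq (hdat f)
    rw [this]
    exact (qm _ _).continuous.comp hval
  exact hon.continuousAt (hN.mem_nhds h0N)

theorem lower (m : ℕ) : ∃ (A : Type) (_ : AddCommGroup A) (ψ : Coc (UnordConfigSpace S2 (m+2)) A),
    addOrderOf (ψ.φ (gen m)) = 2 * m + 2 := by
  obtain ⟨c, hc⟩ := coc_of_covering (qm (m+2) (2*m+2)) (qm_cov (m+2) (2*m+2)).toAdditive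
  refine ⟨Additive (Mu (2*m+2)), inferInstance, c.comap ⟨gX, continuous_gX⟩, ?_⟩
  obtain ⟨ℓ, h1, h2⟩ := bz_lift m
  have hn : ((2 * m + 2 : ℕ) : ℂ) ≠ 0 := by exact_mod_cast (by omega : 2 * m + 2 ≠ 0)
  let v : I → Fin (m+2) → ℂ × ℂ := fun t i => (bz m t i, 1)
  let c' : I → ℂ := fun t => Complex.exp (-ℓ t / ((2 * m + 2 : ℕ) : ℂ))
  let f : I → Fk S2 (m+2) := fun t => mapF (es 0) (es_inj 0) ⟨bz m t, bz_inj m t⟩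
  have hdat : ∀ t, Dat (f t) (v t) (c' t) := by
    intro t
    refine ⟨fun i => ?_, ?_⟩
    · have := rep_es 0 (bz m t i)
      rw [zero_mul, zero_add] at this
      exact this
    · have e : (fun x y => dt (v t x) (v t y)) = fun x y => bz m t x - bz m t y := by
        funext x y
        simp [dt, v]
      rw [e]
      change _ * Dz (bz m t) = 1
      rw [h1, ← Complex.exp_nat_mul, mul_div_cancel₀ _ hn, ← Complex.exp_add, neg_add_cancel,
        Complex.exp_zero]
  let Γ : C(I, VV (m+2)) := ⟨fun t => (hdat t).val, Continuous.subtype_mk (continuous_FF _ _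
    (fun i => ((continuous_apply i).comp (continuous_bz m)).prodMk continuous_const) (by fun_prop)) _⟩
  have hcomp : (qm (m+2) (2*m+2)).comp Γ = ContinuousMap.comp ⟨gX, continuous_gX⟩ (gen m) := by
    ext1 t
    exact (gX_eq (hdat t)).symm
  have hζ := (Complex.isPrimitiveRoot_exp (2*m+2) (by omega)).inv
  set ζ := (Complex.exp (2 * Real.pi * Complex.I / ((2 * m + 2 : ℕ) : ℂ)))⁻¹ with hζd
  let u : Mu (2*m+2) := hζ.toRootsOfUnity
  have hu : ((u : ℂˣ) : ℂ) = ζ := rfl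
  have hΓ : Γ 1 = Additive.ofMul u +ᵥ Γ 0 := by
    apply Subtype.ext
    funext j
    change FF (v 1) (c' 1) j = ζ * FF (v 0) (c' 0) j
    have hc1 : c' 1 = ζ * c' 0 := by
      simp only [c', h2, hζd]
      rw [← Complex.exp_neg, ← Complex.exp_add]
      congr 1
      field_simp
      ring
    obtain ⟨p, hp⟩ := pr_eq.1 (bsw_loop m)
    have hb : ∀ i, bz m 1 i = bz m 0 (p i) := fun i => (congr_fun hp i).symm
    simp only [FF, v, hc1, hb]
    rw [Equiv.prod_comp p (fun i => dt (bz m 0 i, 1) (1, ((j : ℕ) : ℂ)))]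
    ring
  have := hc Γ _ hΓ
  rw [hcomp] at this
  change addOrderOf (c.φ _) = _
  rw [this, addOrderOf_ofMul_eq_orderOf, ← Subgroup.orderOf_coe, ← orderOf_units, hu]
  exact hζ.eq_orderOf.symm

end lower

theorem final (m : ℕ) :
    Nonempty (SingularHomology ℤ 1 (UnordConfigSpace S2 (m+2)) ≃ₗ[ℤ] ZMod (2 * m + 2)) := by
  obtain ⟨A, _, ψ, hψ⟩ := lower m
  exact theoremH (2 * m + 2) (gen m) (gen_loop m) (fun A _ c => gen_rel m c)
    (fun A _ c h => gen_gen m c h) ψ hψ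

end CfgH

theorem first_homology_of_configuration_spaces_of_two_sphere (k : ℕ) (hk : 2 ≤ k) :
    Nonempty
      ((SingularHomology ℤ 1
          (UnordConfigSpace ↥(Metric.sphere (0 : EuclideanSpace ℝ (Fin 3)) 1) k)) ≃ₗ[ℤ]
        ZMod (2 * k - 2)) := by
  obtain ⟨m, rfl⟩ : ∃ m, k = m + 2 := ⟨k - 2, by omega⟩
  have e : 2 * (m + 2) - 2 = 2 * m + 2 := by omega
  rw [e]
  exact CfgH.final m
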